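/- Assume constants 0 < c_ℙ < min(1, C_ℙ) with c_ℙ·m/log m ≤ |ℙ_m| ≤ C_ℙ·m/log m for all m ≥ 2, where ℙ_m is the set of primes in (⌈m/2⌉, m]. Then for every d ≥ 1 and ε ∈ (0,1), there exists a QMC rule Q using n = ∑_{p ∈ ℙ_m} p² points with m = ⌈16 c_ℙ^{−1} ε^{−1}⌉ (provided min_{p∈ℙ_m} p ≥ d) whose worst-case error over the unit ball of F_d² is at most ε; consequently the information complexity satisfies n(ε, d, F_d²) ≤ C₂·ε^{−3}/log(ε^{−1}) for a constant C₂ independent of d and ε. -/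

import Mathlib

open Finset

noncomputable section

/-- The support of a frequency vector. -/
def supp {d : ℕ} (k : Fin d → ℤ) : Finset (Fin d) :=
  Finset.univ.filter (fun j => k j ≠ 0)

/-- `width(supp k) = max supp(k) - min supp(k) + 1`, with value 1 for empty support. -/
def width {d : ℕ} (k : Fin d → ℤ) : ℕ :=
  if h : (supp k).Nonempty then ((supp k).max' h).val - ((supp k).min' h).val + 1 else 1

/-- `min_{j ∈ supp(k)} log |k_j|`, with value 0 for empty support. -/
noncomputable def logmin {d : ℕ} (k : Fin d → ℤ) : ℝ :=
  if h : (supp k).Nonempty then (supp k).inf' h (fun j => Real.log |(k j : ℝ)|) else 0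

/-- `exp(2πiz)`. -/
noncomputable def e2pi (z : ℂ) : ℂ := Complex.exp (2 * Real.pi * Complex.I * z)

/-- The set `ℙ_m` of primes `p` with `⌈m/2⌉ < p ≤ m`. -/
def Pset (m : ℕ) : Finset ℕ :=
  (Finset.range (m + 1)).filter (fun p => p.Prime ∧ (m + 1) / 2 < p)

/-- The `h`-th point of Korobov's `p`-set `S_{d,p}`:
`x_h^{(p)} = ({h/p²}, {h²/p²}, …, {h^d/p²})`. -/
noncomputable def korobovPt (d p h : ℕ) : Fin d → ℝ :=
  fun j => Int.fract ((h : ℝ) ^ (j.val + 1) / (p : ℝ) ^ 2)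

/-- The weight `max(width(supp k), min_{j ∈ supp k} log |k_j|)` defining the norm of `F_d²`. -/
noncomputable def weight2 {d : ℕ} (k : Fin d → ℤ) : ℝ := max (width k : ℝ) (logmin k)

open Polynomial in
/-- truncated logarithm -/
def truncLog (p : ℕ) [Fact p.Prime] : (ZMod p)[X] :=
  ∑ i ∈ range p, C ((i : ZMod p)⁻¹) * X ^ i

open Polynomial in
lemma truncLog_deriv (p : ℕ) [Fact p.Prime] :
    (1 - X) * derivative (truncLog p) = 1 - X ^ (p - 1) := by
  have hp : p.Prime := Fact.out
  obtain ⟨q, rfl⟩ : ∃ q, p = q + 1 := ⟨p - 1, (Nat.succ_pred hp.pos.ne').symm⟩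
  have h : derivative (truncLog (q + 1)) = ∑ i ∈ range q, (X : (ZMod (q+1))[X]) ^ i := by
    unfold truncLog
    rw [derivative_sum, Finset.sum_range_succ']
    simp only [Nat.cast_zero, pow_zero, mul_one, derivative_C, add_zero]
    apply Finset.sum_congr rfl
    intro i hi
    rw [Finset.mem_range] at hi
    have : ((i + 1 : ℕ) : ZMod (q+1)) ≠ 0 := by
      intro h0
      rw [ZMod.natCast_eq_zero_iff] at h0
      have := Nat.le_of_dvd (by omega) h0
      omega
    rw [derivative_C_mul_X_pow, inv_mul_cancel₀ this]
    simp
  rw [h, Nat.add_sub_cancel]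
  exact mul_neg_geom_sum X q

open Polynomial in
lemma truncLog_eval_zero (p : ℕ) [Fact p.Prime] : (truncLog p).coeff 0 = 0 := by
  have hp : p.Prime := Fact.out
  unfold truncLog
  rw [finsetSum_coeff]
  apply Finset.sum_eq_zero
  intro i hi
  rcases i with _ | i <;> simp [coeff_X_pow]

open Polynomial in
lemma truncLog_natDegree (p : ℕ) [Fact p.Prime] : (truncLog p).natDegree ≤ p - 1 := by
  unfold truncLog
  apply natDegree_sum_le_of_forall_le
  intro i hi
  rw [Finset.mem_range] at hi
  exact (natDegree_C_mul_X_pow_le _ _).trans (by omega)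

open Polynomial in
/-- evaluation of a family at the truncated logarithm -/
def logComb (p : ℕ) [Fact p.Prime] (A : ℕ) (g : ℕ → (ZMod p)[X]) : (ZMod p)[X] :=
  ∑ i ∈ range A, (1 - X) ^ i * (g i).comp (truncLog p)

open Polynomial in
/-- measure of a family -/
def logMeas (p : ℕ) [Fact p.Prime] (A : ℕ) (g : ℕ → (ZMod p)[X]) : ℕ :=
  by classical exact ∑ i ∈ range A, if g i = 0 then 0 else (g i).natDegree + 1

open Polynomial in
lemma deriv_step (p : ℕ) [Fact p.Prime] (c : ZMod p) (g : (ZMod p)[X]) (hg : g.natDegree < p)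
    (hg0 : g ≠ 0) :
    (c ≠ 0 → C c * g + derivative g ≠ 0 ∧ (C c * g + derivative g).natDegree = g.natDegree) := by
  intro hc
  have h1 : (C c * g).natDegree = g.natDegree := natDegree_C_mul hc
  by_cases hd : g.natDegree = 0
  · have : derivative g = 0 := by
      rw [natDegree_eq_zero] at hd; obtain ⟨a, rfl⟩ := hd; simp
    rw [this, add_zero]
    exact ⟨mul_ne_zero (by simpa using hc) hg0, h1⟩
  · have hlt : (derivative g).natDegree < (C c * g).natDegree := by
      rw [h1]; exact natDegree_derivative_lt hd
    have h2 := natDegree_add_eq_left_of_natDegree_lt hlt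
    refine ⟨?_, h2.trans h1⟩
    intro h0
    rw [h0, natDegree_zero] at h2
    omega

open Polynomial in
lemma deriv_zero_const (p : ℕ) [Fact p.Prime] (g : (ZMod p)[X]) (hg : g.natDegree < p)
    (h0 : derivative g = 0) : g.natDegree = 0 := by
  by_contra hd
  have h1 : (derivative g).coeff (g.natDegree - 1) = 0 := by rw [h0]; simp
  rw [coeff_derivative] at h1
  have h2 : g.natDegree - 1 + 1 = g.natDegree := by omega
  rw [h2] at h1
  rcases mul_eq_zero.mp h1 with h | h
  · rw [coeff_natDegree, leadingCoeff_eq_zero] at h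
    rw [h] at hd; simp at hd
  · have : ((g.natDegree : ℕ) : ZMod p) = 0 := by
      rw [← h, ← h2]; push_cast; simp
    rw [ZMod.natCast_eq_zero_iff] at this
    have := Nat.le_of_dvd (by omega) this
    omega

open Polynomial in
lemma logComb_step (p : ℕ) [Fact p.Prime] (A : ℕ) (g : ℕ → (ZMod p)[X]) (i k : ℕ) (hk : k + 1 ≤ p)
    (h : X ^ (k + 1) ∣ logComb p A g) :
    X ^ k ∣ logComb p A (fun l => C ((i : ZMod p) - l) * g l + derivative (g l)) := by
  have hid : logComb p A (fun l => C ((i : ZMod p) - l) * g l + derivative (g l)) =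
      (1 - X) * derivative (logComb p A g) + C (i : ZMod p) * logComb p A g
       + X ^ (p - 1) * ∑ l ∈ range A, (1 - X) ^ l * (derivative (g l)).comp (truncLog p) := by
    unfold logComb
    rw [derivative_sum, Finset.mul_sum, Finset.mul_sum, Finset.mul_sum, ← Finset.sum_add_distrib,
      ← Finset.sum_add_distrib]
    apply Finset.sum_congr rfl
    intro l hl
    rw [derivative_mul, derivative_comp]
    have e1 : (1 - X) * derivative ((1 - X : (ZMod p)[X]) ^ l) = - C (l : ZMod p) * (1 - X) ^ l := by
      rcases l with _ | l
      · simp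
      · rw [derivative_pow]; simp; ring
    have e2 := truncLog_deriv p
    simp only [add_comp, mul_comp, C_sub, sub_comp, C_comp]
    linear_combination (- (g l).comp (truncLog p)) * e1 -
      ((1 - X) ^ l * (derivative (g l)).comp (truncLog p)) * e2
  rw [hid]
  obtain ⟨q, hq⟩ := h
  refine dvd_add (dvd_add ?_ ?_) ?_
  · rw [hq, derivative_mul, derivative_X_pow]
    refine Dvd.dvd.mul_left (dvd_add ?_ ?_) _
    · simp only [Nat.add_sub_cancel]
      exact Dvd.dvd.mul_right (Dvd.intro_left _ rfl) _
    · exact Dvd.dvd.mul_right (pow_dvd_pow _ (by omega)) _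
  · rw [hq]
    exact Dvd.dvd.mul_left (Dvd.dvd.mul_right (pow_dvd_pow _ (by omega)) _) _
  · exact Dvd.dvd.mul_right (pow_dvd_pow _ (by omega)) _

open Polynomial in
lemma logComb_indep (p : ℕ) [Fact p.Prime] (A : ℕ) (hA : A ≤ p) :
    ∀ (μ : ℕ) (g : ℕ → (ZMod p)[X]), μ ≤ p → (∀ i, (g i).natDegree < p) →
      logMeas p A g ≤ μ → X ^ μ ∣ logComb p A g → ∀ i < A, g i = 0 := by
  classical
  intro μ
  induction μ with
  | zero =>
    intro g _ _ hm _ i hi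
    by_contra h
    have : 0 < logMeas p A g := by
      unfold logMeas
      apply Finset.sum_pos' (fun _ _ => Nat.zero_le _)
      exact ⟨i, Finset.mem_range.mpr hi, by rw [if_neg h]; omega⟩
    omega
  | succ k ih =>
    intro g hk hdeg hm hdvd
    by_contra hcon
    push Not at hcon
    obtain ⟨i, hi, hgi⟩ := hcon
    set g' : ℕ → (ZMod p)[X] := fun l => C ((i : ZMod p) - l) * g l + derivative (g l) with hg'
    have hne : ∀ l < A, l ≠ i → ((i : ZMod p) - l) ≠ 0 := by
      intro l hl hli h0
      rw [sub_eq_zero, ZMod.natCast_eq_natCast_iff] at h0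
      have := Nat.ModEq.eq_of_lt_of_lt h0 (by omega) (by omega)
      omega
    have hdeg' : ∀ l, (g' l).natDegree < p := by
      intro l
      refine lt_of_le_of_lt (natDegree_add_le _ _) (max_lt ?_ ?_)
      · exact lt_of_le_of_lt (natDegree_C_mul_le _ _) (hdeg l)
      · exact lt_of_le_of_lt (natDegree_derivative_le _) (by have := hdeg l; omega)
    have hg'i : g' i = derivative (g i) := by simp [hg']
    have hm' : logMeas p A g' ≤ k := by
      have : logMeas p A g' < logMeas p A g := by
        unfold logMeas
        apply Finset.sum_lt_sum
        · intro l hl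
          rw [Finset.mem_range] at hl
          by_cases h0 : g l = 0
          · have : g' l = 0 := by simp [hg', h0]
            simp [h0, this]
          · rw [if_neg h0]
            split_ifs
            · omega
            · have : (g' l).natDegree ≤ (g l).natDegree := by
                refine (natDegree_add_le _ _).trans (max_le (natDegree_C_mul_le _ _) ?_)
                exact (natDegree_derivative_le _).trans (by omega)
              omega
        · refine ⟨i, Finset.mem_range.mpr hi, ?_⟩
          rw [if_neg hgi, hg'i]
          split_ifs with h
          · omega
          · have : (g i).natDegree ≠ 0 := by
              intro h0
              apply h
              rw [natDegree_eq_zero] at h0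
              obtain ⟨a, ha⟩ := h0
              rw [← ha]; simp
            have := natDegree_derivative_lt this
            omega
      omega
    have hz := ih g' (by omega) hdeg' hm' (logComb_step p A g i k hk hdvd)
    have hz2 : ∀ l < A, l ≠ i → g l = 0 := by
      intro l hl hli
      by_contra h0
      exact (deriv_step p _ (g l) (hdeg l) h0 (hne l hl hli)).1 (hz l hl)
    have hconst : (g i).natDegree = 0 := deriv_zero_const p _ (hdeg i) (by rw [← hg'i]; exact hz i hi)
    have hF : logComb p A g = (1 - X) ^ i * (g i).comp (truncLog p) := by
      unfold logComb
      apply Finset.sum_eq_single_of_mem i (Finset.mem_range.mpr hi)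
      intro l hl hli
      rw [hz2 l (Finset.mem_range.mp hl) hli]; simp
    rw [natDegree_eq_zero] at hconst
    obtain ⟨a, ha⟩ := hconst
    rw [hF, ← ha, C_comp] at hdvd
    have h1 : X ∣ (1 - X) ^ i * (C a : (ZMod p)[X]) := dvd_trans (dvd_pow_self X (by omega)) hdvd
    rw [X_dvd_iff, coeff_zero_eq_eval_zero] at h1
    simp at h1
    apply hgi
    rw [← ha, h1, C_0]

/-- formal derivation -/
def stepDer (p : ℕ) [Fact p.Prime] :
    Derivation (ZMod p) (MvPolynomial (Fin 3) (ZMod p)) (MvPolynomial (Fin 3) (ZMod p)) :=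
  MvPolynomial.mkDerivation (ZMod p)
    ![MvPolynomial.X 0 * (1 - MvPolynomial.X 0), MvPolynomial.X 0 - MvPolynomial.X 2, 0]

lemma stepDer_totalDegree (p : ℕ) [Fact p.Prime] (G : MvPolynomial (Fin 3) (ZMod p)) :
    (stepDer p G).totalDegree ≤ G.totalDegree + 1 := by
  classical
  conv_lhs => rw [G.as_sum, map_sum]
  apply MvPolynomial.totalDegree_finsetSum_le
  intro s hs
  have hsd := MvPolynomial.le_totalDegree hs
  unfold stepDer
  rw [MvPolynomial.mkDerivation_monomial]
  refine (MvPolynomial.totalDegree_smul_le _ _).trans ?_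
  apply MvPolynomial.totalDegree_finsetSum_le
  intro i hi
  beta_reduce
  rw [smul_eq_mul]
  refine (MvPolynomial.totalDegree_mul _ _).trans ?_
  have h1 : (MvPolynomial.monomial (s - Finsupp.single i 1) ((s i : ℕ) : ZMod p)).totalDegree + 1 ≤ s.sum fun _ e => e := by
    have h2 := MvPolynomial.totalDegree_monomial_le (s - Finsupp.single i 1) ((s i : ℕ) : ZMod p)
    have h3 : (s - Finsupp.single i 1).degree + (Finsupp.single i 1).degree = s.degree := by
      rw [← map_add]
      congr 1
      apply tsub_add_cancel_of_le
      rw [Finsupp.single_le_iff]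
      exact Nat.one_le_iff_ne_zero.mpr (Finsupp.mem_support_iff.mp hi)
    rw [Finsupp.degree_single] at h3
    simp only [Finsupp.degree_apply] at h3
    simp only [Finsupp.sum, id] at h2 ⊢
    omega
  have h4 : ((![MvPolynomial.X 0 * (1 - MvPolynomial.X 0), MvPolynomial.X 0 - MvPolynomial.X 2, 0] : Fin 3 → MvPolynomial (Fin 3) (ZMod p)) i).totalDegree ≤ 2 := by
    fin_cases i
    · refine (MvPolynomial.totalDegree_mul _ _).trans ?_
      have := MvPolynomial.totalDegree_sub (1 : MvPolynomial (Fin 3) (ZMod p)) (MvPolynomial.X 0)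
      simp at this ⊢
      omega
    · refine (MvPolynomial.totalDegree_sub _ _).trans ?_
      simp
    · simp
  omega

lemma stepDer_iter_totalDegree (p : ℕ) [Fact p.Prime] (G : MvPolynomial (Fin 3) (ZMod p)) (n : ℕ) :
    ((stepDer p)^[n] G).totalDegree ≤ G.totalDegree + n := by
  induction n with
  | zero => simp
  | succ n ih =>
    rw [Function.iterate_succ_apply']
    have := stepDer_totalDegree p ((stepDer p)^[n] G)
    omega

open Polynomial in
/-- the operator `X (1 - X) d/dX` -/
def eulerOp (p : ℕ) [Fact p.Prime] (f : (ZMod p)[X]) : (ZMod p)[X] := X * (1 - X) * derivative f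

open Polynomial in
/-- substitution -/
def stepEval (p : ℕ) [Fact p.Prime] : MvPolynomial (Fin 3) (ZMod p) →ₐ[ZMod p] (ZMod p)[X] :=
  MvPolynomial.aeval ![X, truncLog p, X ^ p]

open Polynomial in
lemma eulerOp_stepEval (p : ℕ) [Fact p.Prime] (G : MvPolynomial (Fin 3) (ZMod p)) :
    eulerOp p (stepEval p G) = stepEval p (stepDer p G) := by
  have hp : p.Prime := Fact.out
  induction G using MvPolynomial.induction_on with
  | C a => simp [eulerOp, stepEval, MvPolynomial.algebraMap_eq, MvPolynomial.derivation_C]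
  | add f g hf hg => 
    simp only [map_add, ← hf, ← hg, eulerOp]; ring
  | mul_X f i hf =>
    rw [Derivation.leibniz, smul_eq_mul, smul_eq_mul, map_add, map_mul, map_mul, map_mul, ← hf]
    have h : eulerOp p (stepEval p (MvPolynomial.X i)) = stepEval p (stepDer p (MvPolynomial.X i)) := by
      unfold eulerOp stepEval stepDer
      rw [MvPolynomial.mkDerivation_X, MvPolynomial.aeval_X]
      fin_cases i
      · simp
      · have := truncLog_deriv p
        simp
        have h2 : (X : (ZMod p)[X]) ^ p = X ^ (p - 1) * X := by
          rw [← pow_succ]; congr 1; have := hp.pos; omega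
        rw [h2]
        linear_combination X * this
      · simp
        try (right; rw [derivative_X_pow]; simp)
    rw [← h]
    unfold eulerOp
    rw [derivative_mul]
    ring

open Polynomial in
lemma eulerOp_iter_stepEval (p : ℕ) [Fact p.Prime] (G : MvPolynomial (Fin 3) (ZMod p)) (n : ℕ) :
    (eulerOp p)^[n] (stepEval p G) = stepEval p ((stepDer p)^[n] G) := by
  induction n generalizing G with
  | zero => rfl
  | succ n ih => rw [Function.iterate_succ_apply, Function.iterate_succ_apply, eulerOp_stepEval, ih]

open Polynomial in
lemma eulerOp_mult (p : ℕ) [Fact p.Prime] (x : ZMod p) (hx0 : x ≠ 0) (hx1 : x ≠ 1) (D : ℕ) (hD : D ≤ p) :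
    ∀ f : (ZMod p)[X], (∀ n < D, ((eulerOp p)^[n] f).eval x = 0) → (X - C x) ^ D ∣ f := by
  induction D with
  | zero => intro f _; simp
  | succ D ih =>
    intro f hf
    have h1 := ih (by omega) f (fun n hn => hf n (by omega))
    have h2 := ih (by omega) (eulerOp p f) (fun n hn => by
      have := hf (n+1) (by omega)
      rwa [Function.iterate_succ_apply] at this)
    obtain ⟨h, rfl⟩ := h1
    rw [pow_succ]
    apply mul_dvd_mul_left
    rcases D with _ | D
    · have := hf 0 (by omega)
      simp at this
      rwa [dvd_iff_isRoot]
    · have e : eulerOp p ((X - C x) ^ (D + 1) * h) = (X - C x) ^ D * (C ((D + 1 : ℕ) : ZMod p) * (X * (1 - X)) * h)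
          + (X - C x) ^ (D+1) * (X * (1 - X) * derivative h) := by
        unfold eulerOp
        rw [derivative_mul, derivative_X_sub_C_pow]
        simp
        ring
      rw [e] at h2
      have h3 : (X - C x) ^ (D+1) ∣ (X - C x) ^ D * (C ((D + 1 : ℕ) : ZMod p) * (X * (1 - X)) * h) :=
        (dvd_add_left (Dvd.intro _ rfl)).mp h2
      rw [pow_succ] at h3
      have h4 := (mul_dvd_mul_iff_left (pow_ne_zero D (X_sub_C_ne_zero x))).mp h3
      rw [dvd_iff_isRoot] at h4 ⊢
      have hc : ((D + 1 : ℕ) : ZMod p) ≠ 0 := by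
        intro h0
        rw [ZMod.natCast_eq_zero_iff] at h0
        have := Nat.le_of_dvd (by omega) h0
        omega
      simp only [IsRoot.def, eval_mul, eval_C, eval_X, eval_sub, eval_one] at h4 ⊢
      have h5 : (1 - x) ≠ 0 := sub_ne_zero.mpr (Ne.symm hx1)
      push_cast at hc
      simpa [hc, hx0, h5] using h4

open Polynomial in
/-- auxiliary polynomial -/
def auxPoly (p : ℕ) [Fact p.Prime] (A B C : ℕ) :
    (Fin A × Fin B × Fin C → ZMod p) →ₗ[ZMod p] MvPolynomial (Fin 3) (ZMod p) :=
  Fintype.linearCombination (ZMod p) (fun i : Fin A × Fin B × Fin C =>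
    (1 - MvPolynomial.X 0) ^ (i.1 : ℕ) * MvPolynomial.X 1 ^ (i.2.1 : ℕ) * MvPolynomial.X 2 ^ (i.2.2 : ℕ))

lemma auxPoly_totalDegree (p : ℕ) [Fact p.Prime] (A B C : ℕ) (l : Fin A × Fin B × Fin C → ZMod p) :
    (auxPoly p A B C l).totalDegree ≤ A + B + C := by
  unfold auxPoly
  rw [Fintype.linearCombination_apply]
  apply MvPolynomial.totalDegree_finsetSum_le
  rintro ⟨a, b, c⟩ _
  refine (MvPolynomial.totalDegree_smul_le _ _).trans ?_
  refine (MvPolynomial.totalDegree_mul _ _).trans ?_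
  have h1 := MvPolynomial.totalDegree_mul ((1 - MvPolynomial.X 0 : MvPolynomial (Fin 3) (ZMod p)) ^ (a : ℕ)) (MvPolynomial.X 1 ^ (b : ℕ))
  have h2 := MvPolynomial.totalDegree_pow (1 - MvPolynomial.X 0 : MvPolynomial (Fin 3) (ZMod p)) a
  have h3 := MvPolynomial.totalDegree_sub (1 : MvPolynomial (Fin 3) (ZMod p)) (MvPolynomial.X 0)
  simp only [MvPolynomial.totalDegree_X_pow, MvPolynomial.totalDegree_one, MvPolynomial.totalDegree_X] at h1 h3 ⊢
  have h4 : (a : ℕ) * (1 - MvPolynomial.X 0 : MvPolynomial (Fin 3) (ZMod p)).totalDegree ≤ a * 1 :=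
    Nat.mul_le_mul_left _ (by simpa using h3)
  have := a.2; have := b.2; have := c.2
  omega

open Polynomial in
lemma auxPoly_ne_zero (p : ℕ) [Fact p.Prime] (A B C : ℕ) (hA : A ≤ p) (hB : B ≤ p) (hAB : A * B ≤ p)
    (l : Fin A × Fin B × Fin C → ZMod p) (h0 : stepEval p (auxPoly p A B C l) = 0) : l = 0 := by
  classical
  let g : ℕ → ℕ → (ZMod p)[X] := fun c a => if h : a < A ∧ c < C then
    ∑ b : Fin B, Polynomial.C (l (⟨a, h.1⟩, b, ⟨c, h.2⟩)) * X ^ (b : ℕ) else 0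
  have hgdeg : ∀ c a, g c a ∈ degreeLT (ZMod p) B := by
    intro c a
    simp only [g]
    split_ifs with h
    · apply Submodule.sum_mem
      intro b _
      rw [mem_degreeLT]
      exact lt_of_le_of_lt (degree_C_mul_X_pow_le _ _) (by exact_mod_cast b.2)
    · exact Submodule.zero_mem _
  have hnat : ∀ c a, g c a ≠ 0 → (g c a).natDegree < B := by
    intro c a h
    rw [natDegree_lt_iff_degree_lt h]
    exact mem_degreeLT.mp (hgdeg c a)
  have hpos : 0 < p := (Fact.out : p.Prime).pos
  have hexp : stepEval p (auxPoly p A B C l) = ∑ c ∈ range C, X ^ (p * c) * logComb p A (g c) := by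
    unfold auxPoly logComb
    rw [Fintype.linearCombination_apply, map_sum, Fintype.sum_prod_type]
    rw [← Fin.sum_univ_eq_sum_range (fun c => X ^ (p * c) * ∑ i ∈ range A, (1 - X) ^ i * (g c i).comp (truncLog p)) C]
    simp only [← Fin.sum_univ_eq_sum_range (fun i => (1 - X) ^ i * (g _ i).comp (truncLog p)) A]
    simp only [Finset.mul_sum]
    conv_rhs => rw [Finset.sum_comm]
    apply Finset.sum_congr rfl
    intro a _
    rw [Fintype.sum_prod_type, Finset.sum_comm]
    apply Finset.sum_congr rfl
    intro c _
    simp only [g, a.2, c.2, and_self, dite_true]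
    rw [← Polynomial.coe_compRingHom_apply, map_sum, Finset.mul_sum, Finset.mul_sum]
    apply Finset.sum_congr rfl
    intro b _
    simp [stepEval, pow_mul, Algebra.smul_def]
    ring
  rw [hexp] at h0
  have key : ∀ c, ∀ a, g c a = 0 := by
    intro c
    induction c using Nat.strong_induction_on with
    | _ c ih =>
      by_cases hc : c < C
      swap
      · intro a; simp [g, hc]
      have hz : X ^ (p * c) * logComb p A (g c) + ∑ c' ∈ Finset.Ico (c+1) C, X ^ (p * c') * logComb p A (g c') = 0 := by
        rw [← h0, Finset.range_eq_Ico, ← Finset.sum_Ico_consecutive _ (Nat.zero_le c) hc.le, Finset.sum_eq_sum_Ico_succ_bot hc]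
        rw [Finset.sum_eq_zero (s := Finset.Ico 0 c), zero_add]
        intro c' hc'
        rw [Finset.mem_Ico] at hc'
        unfold logComb
        rw [Finset.sum_eq_zero, mul_zero]
        intro i _
        rw [ih c' hc'.2]; simp
      have hd : X ^ (p * c) * X ^ p ∣ X ^ (p * c) * logComb p A (g c) := by
        rw [eq_neg_of_add_eq_zero_left hz, dvd_neg]
        apply Finset.dvd_sum
        intro c' hc'
        rw [Finset.mem_Ico] at hc'
        apply Dvd.dvd.mul_right
        rw [← pow_add]
        apply pow_dvd_pow
        nlinarith
      have hd2 : X ^ p ∣ logComb p A (g c) :=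
        (mul_dvd_mul_iff_left (pow_ne_zero _ X_ne_zero)).mp hd
      have := logComb_indep p A hA p (g c) le_rfl (fun i => by
        by_cases h : g c i = 0
        · rw [h]; simpa using hpos
        · exact (hnat c i h).trans_le hB) (by
          refine le_trans ?_ hAB
          unfold logMeas
          refine (Finset.sum_le_card_nsmul _ _ B ?_).trans (by simp)
          intro i _
          split_ifs with h
          · omega
          · exact hnat c i h) hd2
      intro a
      by_cases ha : a < A
      · exact this a ha
      · simp [g, ha]
  funext ⟨a, b, c⟩
  have := key c a
  simp only [g, a.2, c.2, and_self, dite_true] at this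
  have h2 := congrArg (fun q => coeff q (b : ℕ)) this
  simp only [finsetSum_coeff, coeff_C_mul, coeff_X_pow, coeff_zero] at h2
  rw [Finset.sum_eq_single b] at h2
  · simpa using h2
  · intro b' _ hb'
    rw [if_neg, mul_zero]
    intro h; exact hb' (Fin.ext h.symm)
  · simp

open Polynomial in
/-- Stepanov bound for level sets of the truncated logarithm. -/
lemma stepanov (p : ℕ) [Fact p.Prime] (A B C D : ℕ) (hA : A ≤ p) (hB : B ≤ p) (hAB : A * B ≤ p)
    (hDp : D ≤ p) (hA0 : 1 ≤ A) (hB0 : 1 ≤ B) (hC0 : 1 ≤ C)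
    (hD : D * (A + B + C + D + 1) < A * B * C) (r : ZMod p) (Z : Finset (ZMod p))
    (hZ : ∀ x ∈ Z, x ≠ 0 ∧ x ≠ 1 ∧ (truncLog p).eval x = r) :
    Z.card * D ≤ p * (B + C) := by
  classical
  set M := A + B + C + D + 1 with hM
  let ev : MvPolynomial (Fin 3) (ZMod p) →ₐ[ZMod p] (ZMod p)[X] :=
    MvPolynomial.aeval ![X, Polynomial.C r, X]
  let Λ : (Fin A × Fin B × Fin C → ZMod p) →ₗ[ZMod p] (Fin D × Fin M → ZMod p) :=
    LinearMap.pi fun i => (lcoeff (ZMod p) (i.2 : ℕ)) ∘ₗ ev.toLinearMap ∘ₗ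
      ((stepDer p : Derivation (ZMod p) (MvPolynomial (Fin 3) (ZMod p)) (MvPolynomial (Fin 3) (ZMod p))).toLinearMap ^ (i.1 : ℕ)) ∘ₗ auxPoly p A B C
  have hker : LinearMap.ker Λ ≠ ⊥ := by
    apply LinearMap.ker_ne_bot_of_finrank_lt
    simp [← mul_assoc]
    exact hD
  obtain ⟨l, hl, hl0⟩ := Submodule.exists_mem_ne_zero_of_ne_bot hker
  set Ψ := stepEval p (auxPoly p A B C l) with hΨ
  have hΨ0 : Ψ ≠ 0 := fun h => hl0 (auxPoly_ne_zero p A B C hA hB hAB l h)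
  have hev : ∀ n < D, ev ((stepDer p)^[n] (auxPoly p A B C l)) = 0 := by
    intro n hn
    have hdeg : (ev ((stepDer p)^[n] (auxPoly p A B C l))).natDegree < M := by
      have h1 : (ev ((stepDer p)^[n] (auxPoly p A B C l))).natDegree ≤ ((stepDer p)^[n] (auxPoly p A B C l)).totalDegree * 1 := by
        apply MvPolynomial.aeval_natDegree_le _ le_rfl
        intro i
        fin_cases i <;> simp
      have h2 := stepDer_iter_totalDegree p (auxPoly p A B C l) n
      have h3 := auxPoly_totalDegree p A B C l
      omega
    ext i
    by_cases hi : i < M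
    · have := congrFun (LinearMap.mem_ker.mp hl) (⟨n, hn⟩, ⟨i, hi⟩)
      simp only [Λ, LinearMap.pi_apply, LinearMap.comp_apply, lcoeff_apply, Pi.zero_apply, Module.End.pow_apply] at this
      rw [coeff_zero]
      exact this
    · rw [coeff_eq_zero_of_natDegree_lt (by omega), coeff_zero]
  have hmult : ∀ x ∈ Z, (X - Polynomial.C x) ^ D ∣ Ψ := by
    intro x hx
    obtain ⟨h0, h1, hr⟩ := hZ x hx
    apply eulerOp_mult p x h0 h1 D hDp
    intro n hn
    rw [hΨ, eulerOp_iter_stepEval]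
    have h2 : ∀ G : MvPolynomial (Fin 3) (ZMod p), (stepEval p G).eval x = (ev G).eval x := by
      intro G
      have : ((aeval x : (ZMod p)[X] →ₐ[ZMod p] ZMod p).comp (stepEval p)) = (aeval x : (ZMod p)[X] →ₐ[ZMod p] ZMod p).comp ev := by
        apply MvPolynomial.algHom_ext
        intro i
        fin_cases i <;> simp [stepEval, ev, hr, ZMod.pow_card, coe_aeval_eq_eval]
      have := DFunLike.congr_fun this G
      simpa [coe_aeval_eq_eval] using this
    rw [h2, hev n hn, eval_zero]
  have hprod : (∏ x ∈ Z, (X - Polynomial.C x) ^ D) ∣ Ψ := by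
    apply Finset.prod_dvd_of_coprime
    · intro x _ y _ hxy
      exact (pairwise_coprime_X_sub_C Function.injective_id hxy).pow
    · exact hmult
  have hdeg1 := natDegree_le_of_dvd hprod hΨ0
  rw [natDegree_prod _ _ (fun x _ => pow_ne_zero _ (X_sub_C_ne_zero x))] at hdeg1
  simp only [natDegree_pow, natDegree_X_sub_C, mul_one, Finset.sum_const, smul_eq_mul] at hdeg1
  refine hdeg1.trans ?_
  rw [hΨ]
  unfold auxPoly
  rw [Fintype.linearCombination_apply, map_sum]
  apply natDegree_sum_le_of_forall_le
  rintro ⟨a, b, c⟩ _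
  rw [map_smul]
  refine (natDegree_smul_le _ _).trans ?_
  simp only [stepEval, map_mul, map_pow, map_sub, map_one, MvPolynomial.aeval_X]
  simp only [Matrix.cons_val_zero, Matrix.cons_val_one, Matrix.cons_val]
  refine natDegree_mul_le.trans ?_
  have h1 := natDegree_mul_le (p := (1 - X : (ZMod p)[X]) ^ (a : ℕ)) (q := truncLog p ^ (b : ℕ))
  have h2 : ((1 - X : (ZMod p)[X]) ^ (a : ℕ)).natDegree ≤ a * 1 := by
    apply natDegree_pow_le_of_le
    refine (natDegree_sub_le _ _).trans (by simp)
  have h3 : (truncLog p ^ (b : ℕ)).natDegree ≤ b * (p - 1) := natDegree_pow_le_of_le _ (truncLog_natDegree p)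
  have h4 : (((X : (ZMod p)[X]) ^ p) ^ (c : ℕ)).natDegree ≤ c * p := by
    rw [← pow_mul, natDegree_X_pow]; rw [mul_comm]
  have ha := a.2; have hb := b.2; have hc := c.2
  have h5 : (b : ℕ) * (p - 1) ≤ (B - 1) * p := Nat.mul_le_mul (by omega) (by omega)
  have h6 : (c : ℕ) * p ≤ (C - 1) * p := Nat.mul_le_mul (by omega) (by omega)
  have h7 : p * (B + C) = (B - 1) * p + (C - 1) * p + 2 * p := by
    obtain ⟨B, rfl⟩ := Nat.exists_eq_add_of_le' hB0
    obtain ⟨C, rfl⟩ := Nat.exists_eq_add_of_le' hC0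
    simp; ring
  omega

/-- Teichmueller-like lift modulo `p ^ 2`. -/
def tauFun (p : ℕ) (a : ZMod p) : ZMod (p ^ 2) := ((a.cast : ℤ) : ZMod (p ^ 2)) ^ p

lemma tauFun_int (p : ℕ) (x : ℤ) : tauFun p (x : ZMod p) = (x : ZMod (p ^ 2)) ^ p := by
  unfold tauFun
  have h1 : (p : ℤ) ∣ x - ((x : ZMod p).cast : ℤ) := by
    rw [← ZMod.intCast_eq_intCast_iff_dvd_sub, ZMod.intCast_zmod_cast]
  have h2 := dvd_sub_pow_of_dvd_sub (p := p) h1 1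
  rw [pow_one] at h2
  have h3 := (ZMod.intCast_eq_intCast_iff_dvd_sub ((((x : ZMod p).cast : ℤ)) ^ p) (x ^ p) (p ^ 2)).mpr
    (by push_cast; exact h2)
  push_cast at h3
  exact h3

/-- the lift as a monoid homomorphism -/
def tau (p : ℕ) [Fact p.Prime] : ZMod p →* ZMod (p ^ 2) where
  toFun := tauFun p
  map_one' := by
    have := tauFun_int p 1
    simpa using this
  map_mul' a b := by
    obtain ⟨x, rfl⟩ := ZMod.intCast_surjective a
    obtain ⟨y, rfl⟩ := ZMod.intCast_surjective b
    rw [← Int.cast_mul, tauFun_int, tauFun_int, tauFun_int]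
    push_cast
    rw [mul_pow]

lemma tau_int (p : ℕ) [Fact p.Prime] (x : ℤ) : tau p (x : ZMod p) = (x : ZMod (p ^ 2)) ^ p :=
  tauFun_int p x

/-- reduction modulo `p` -/
def redp (p : ℕ) : ZMod (p ^ 2) →+* ZMod p := ZMod.castHom (dvd_pow_self p two_ne_zero) (ZMod p)

lemma redp_tau (p : ℕ) [Fact p.Prime] (a : ZMod p) : redp p (tau p a) = a := by
  obtain ⟨x, rfl⟩ := ZMod.intCast_surjective a
  rw [tau_int, map_pow, map_intCast, ZMod.pow_card]

lemma tau_injective (p : ℕ) [Fact p.Prime] : Function.Injective (tau p) :=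
  Function.LeftInverse.injective (g := redp p) (redp_tau p)

/-- multiplication by `p` -/
def iotap (p : ℕ) : ZMod p →+ ZMod (p ^ 2) :=
  ZMod.lift p ⟨(zmultiplesHom (ZMod (p ^ 2))) (p : ZMod (p ^ 2)), by
    simp
    rw [← Nat.cast_mul, ← sq]
    exact ZMod.natCast_self (p ^ 2)⟩

lemma iotap_int (p : ℕ) (x : ℤ) : iotap p (x : ZMod p) = (p * x : ZMod (p ^ 2)) := by
  unfold iotap
  rw [ZMod.lift_coe]
  simp [mul_comm]

lemma iotap_injective (p : ℕ) [hp : Fact p.Prime] : Function.Injective (iotap p) := by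
  rw [injective_iff_map_eq_zero]
  intro a ha
  obtain ⟨x, rfl⟩ := ZMod.intCast_surjective a
  rw [iotap_int] at ha
  have h : ((p * x : ℤ) : ZMod (p ^ 2)) = 0 := by push_cast; exact ha
  rw [ZMod.intCast_zmod_eq_zero_iff_dvd] at h ⊢
  push_cast at h
  rw [sq] at h
  exact (mul_dvd_mul_iff_left (by exact_mod_cast hp.out.ne_zero)).mp h

lemma choose_mod (p : ℕ) [hp : Fact p.Prime] (i : ℕ) (hi : i < p) :
    ((p - 1).choose i : ZMod p) = (-1) ^ i := by
  induction i with
  | zero => simp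
  | succ i ih =>
    have h1 : (p - 1 + 1).choose (i + 1) = (p - 1).choose i + (p - 1).choose (i + 1) :=
      Nat.choose_succ_succ _ _
    have h2 : p - 1 + 1 = p := Nat.succ_pred hp.out.pos.ne'
    rw [h2] at h1
    have h3 : ((p.choose (i + 1) : ℕ) : ZMod p) = 0 := by
      rw [ZMod.natCast_eq_zero_iff]
      exact hp.out.dvd_choose_self (by omega) hi
    rw [h1] at h3
    push_cast at h3
    rw [ih (by omega)] at h3
    rw [pow_succ]
    linear_combination h3

open Polynomial in
lemma tau_sub_one (p : ℕ) [hp : Fact p.Prime] (hp2 : p ≠ 2) (x : ZMod p) :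
    tau p x - tau p (x - 1) = 1 - iotap p ((truncLog p).eval x) := by
  obtain ⟨x, rfl⟩ := ZMod.intCast_surjective x
  have e1 : ((x : ZMod p) - 1) = ((x - 1 : ℤ) : ZMod p) := by push_cast; ring
  have hodd : Odd p := hp.out.odd_of_ne_two hp2
  rw [e1, tau_int, tau_int]
  push_cast
  rw [sub_eq_add_neg (x : ZMod (p ^ 2)) 1, add_pow, Finset.sum_range_succ]
  have hp1 : p = (p - 1) + 1 := (Nat.succ_pred hp.out.pos.ne').symm
  have hL : iotap p ((truncLog p).eval (x : ZMod p)) =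
      ∑ i ∈ range (p - 1), iotap p (((i + 1 : ℕ) : ZMod p)⁻¹ * x ^ (i + 1)) := by
    unfold truncLog
    rw [eval_finsetSum, map_sum]
    have hr : range p = range (p - 1 + 1) := by rw [← hp1]
    rw [hr, Finset.sum_range_succ']
    simp
  have hS : ∑ k ∈ range p, (x : ZMod (p ^ 2)) ^ k * (-1) ^ (p - k) * (p.choose k : ZMod (p ^ 2)) =
      -1 + ∑ i ∈ range (p - 1), iotap p (((i + 1 : ℕ) : ZMod p)⁻¹ * x ^ (i + 1)) := by
    have hr : range p = range (p - 1 + 1) := by rw [← hp1]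
    rw [hr, Finset.sum_range_succ', add_comm]
    congr 1
    · simp [hodd.neg_one_pow]
    · apply Finset.sum_congr rfl
      intro i hi
      rw [Finset.mem_range] at hi
      obtain ⟨b, hb⟩ := hp.out.dvd_choose_self (k := i + 1) (by omega) (by omega)
      have h1 := Nat.add_one_mul_choose_eq (p - 1) i
      rw [← hp1, hb] at h1
      have h2 : (p - 1).choose i = b * (i + 1) := by
        apply Nat.eq_of_mul_eq_mul_left hp.out.pos
        rw [h1]; ring
      have h3 := choose_mod p i (by omega)
      rw [h2] at h3
      push_cast at h3
      have hne : ((i + 1 : ℕ) : ZMod p) ≠ 0 := by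
        intro h0
        rw [ZMod.natCast_eq_zero_iff] at h0
        have := Nat.le_of_dvd (by omega) h0
        omega
      have h4 : ((i + 1 : ℕ) : ZMod p)⁻¹ = b * (-1) ^ i := by
        apply inv_eq_of_mul_eq_one_right
        push_cast
        have h5 : ((-1 : ZMod p)) ^ i * (-1) ^ i = 1 := by rw [← mul_pow]; simp
        linear_combination (-1) ^ i * h3 + h5
      rw [h4]
      have h6 : ((b : ZMod p) * (-1) ^ i * (x : ZMod p) ^ (i + 1)) = ((b * (-1) ^ i * x ^ (i+1) : ℤ) : ZMod p) := by
        push_cast; ring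
      rw [h6, iotap_int, hb]
      have h7 : ((-1 : ZMod (p ^ 2))) ^ (p - (i + 1)) = (-1) ^ i := by
        have : Even (p - (i + 1) + i) := by
          rw [show p - (i+1) + i = p - 1 by omega]
          exact hodd.tsub_odd odd_one
        have h8 := this.neg_one_pow (α := ZMod (p ^ 2))
        rw [pow_add] at h8
        have h9 : ((-1 : ZMod (p ^ 2))) ^ i * (-1) ^ i = 1 := by rw [← mul_pow]; simp
        linear_combination (-1) ^ i * h8 - (-1) ^ (p - (i+1)) * h9
      rw [h7]
      push_cast
      ring
  rw [hS, hL]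
  simp
  ring

lemma parseval_gen {V X : Type*} [Fintype V] [DecidableEq V] (e : V → V → ℂ)
    (he : ∀ a b, ∑ v, e a v * (starRingEnd ℂ) (e b v) = if a = b then (Fintype.card V : ℂ) else 0)
    (s : Finset X) (A : X → V) :
    ∑ v, ‖∑ x ∈ s, e (A x) v‖ ^ 2 =
      Fintype.card V * ∑ x ∈ s, ((s.filter (fun y => A x = A y)).card : ℝ) := by
  rw [← Complex.ofReal_inj]
  push_cast
  have : ∀ v, ((‖∑ x ∈ s, e (A x) v‖ : ℂ)) ^ 2 = ∑ x ∈ s, ∑ y ∈ s, e (A x) v * (starRingEnd ℂ) (e (A y) v) := by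
    intro v
    rw [← Complex.mul_conj', map_sum, Finset.sum_mul_sum]
  simp only [this]
  rw [Finset.sum_comm, Finset.mul_sum]
  apply Finset.sum_congr rfl
  intro x _
  rw [Finset.sum_comm]
  simp only [he]
  rw [Finset.sum_ite, Finset.sum_const]
  simp [mul_comm]

lemma std_orth (N : ℕ) [NeZero N] (c : ZMod N) (hc : IsUnit c) (a b : ZMod N) :
    ∑ v, (ZMod.stdAddChar (c * a * v) : ℂ) * (starRingEnd ℂ) (ZMod.stdAddChar (c * b * v)) =
      if a = b then (Fintype.card (ZMod N) : ℂ) else 0 := by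
  have h : ∀ v : ZMod N, (ZMod.stdAddChar (c * a * v) : ℂ) * (starRingEnd ℂ) (ZMod.stdAddChar (c * b * v))
      = ZMod.stdAddChar (v * (c * (a - b))) := by
    intro v
    rw [← AddChar.map_neg_eq_conj, ← AddChar.map_add_eq_mul]
    congr 1; ring
  simp only [h]
  rw [AddChar.sum_mulShift _ (ZMod.isPrimitive_stdAddChar N)]
  simp only [hc.mul_right_eq_zero, sub_eq_zero]
  split_ifs <;> simp

lemma energy_fiber (p : ℕ) [hp : Fact p.Prime] (hp2 : p ≠ 2) (M : ℕ)
    (hM : ∀ r : ZMod p, (univ.filter (fun x : ZMod p => x ≠ 0 ∧ x ≠ 1 ∧ (truncLog p).eval x = r)).card ≤ M)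
    (a d : (ZMod p)ˣ) (had : a ≠ d) :
    (univ.filter (fun q : (ZMod p)ˣ × (ZMod p)ˣ => tau p a + tau p q.1 = tau p q.2 + tau p d)).card ≤ M := by
  classical
  set μ : ZMod p := a - d with hμ
  have hμ0 : μ ≠ 0 := sub_ne_zero.mpr (fun h => had (Units.ext h))
  set s := univ.filter (fun q : (ZMod p)ˣ × (ZMod p)ˣ => tau p a + tau p q.1 = tau p q.2 + tau p d) with hs
  have hred : ∀ q ∈ s, (q.2 : ZMod p) - q.1 = μ := by
    intro q hq
    rw [hs, mem_filter] at hq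
    have := congrArg (redp p) hq.2
    simp only [map_add, redp_tau] at this
    rw [hμ]; linear_combination -this
  rcases s.eq_empty_or_nonempty with h | ⟨q0, hq0⟩
  · rw [h]; simp
  have hlog : ∀ q ∈ s, tau p μ * (1 - iotap p ((truncLog p).eval (q.2 / μ : ZMod p))) = tau p a - tau p d := by
    intro q hq
    have h1 := hred q hq
    rw [hs, mem_filter] at hq
    rw [← tau_sub_one p hp2, mul_sub, ← map_mul, ← map_mul, mul_div_cancel₀ _ hμ0, mul_sub, mul_div_cancel₀ _ hμ0]
    rw [show (q.2 : ZMod p) - μ * 1 = q.1 by rw [← h1]; ring]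
    linear_combination -hq.2
  refine le_trans ?_ (hM ((truncLog p).eval (q0.2 / μ : ZMod p)))
  apply Finset.card_le_card_of_injOn (fun q => (q.2 / μ : ZMod p))
  · intro q hq
    rw [Finset.mem_coe] at hq
    rw [Finset.mem_coe, mem_filter]
    refine ⟨mem_univ _, div_ne_zero q.2.ne_zero hμ0, ?_, ?_⟩
    · rw [Ne, div_eq_one_iff_eq hμ0]
      intro h
      have := hred q hq
      rw [h] at this
      exact q.1.ne_zero (by linear_combination -this)
    · have h1 := (hlog q hq).trans (hlog q0 hq0).symm
      have hu : IsUnit (tau p μ) := (isUnit_iff_ne_zero.mpr hμ0).map (tau p)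
      have h2 := hu.mul_left_cancel h1
      exact iotap_injective p (by linear_combination -h2)
  · intro q hq q' hq' h
    have h1 : (q.2 : ZMod p) = q'.2 := (div_left_inj' hμ0).mp h
    have h2 := hred q hq
    have h3 := hred q' hq'
    have h4 : (q.1 : ZMod p) = q'.1 := by linear_combination h1 - h2 + h3
    exact Prod.ext (Units.ext h4) (Units.ext h1)

lemma energy_bound (p : ℕ) [hp : Fact p.Prime] (hp2 : p ≠ 2) (M : ℕ)
    (hM : ∀ r : ZMod p, (univ.filter (fun x : ZMod p => x ≠ 0 ∧ x ≠ 1 ∧ (truncLog p).eval x = r)).card ≤ M) :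
    ∑ x : (ZMod p)ˣ × (ZMod p)ˣ, (univ.filter (fun y : (ZMod p)ˣ × (ZMod p)ˣ =>
      tau p x.1 + tau p x.2 = tau p y.1 + tau p y.2)).card ≤ (p - 1) ^ 2 * (M + 1) := by
  classical
  have hc : Fintype.card (ZMod p)ˣ = p - 1 := ZMod.card_units p
  have e : ∑ x : (ZMod p)ˣ × (ZMod p)ˣ, (univ.filter (fun y : (ZMod p)ˣ × (ZMod p)ˣ =>
      tau p x.1 + tau p x.2 = tau p y.1 + tau p y.2)).card =
      ∑ a : (ZMod p)ˣ, ∑ d : (ZMod p)ˣ, (univ.filter (fun q : (ZMod p)ˣ × (ZMod p)ˣ =>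
        tau p a + tau p q.1 = tau p q.2 + tau p d)).card := by
    simp only [Finset.card_filter, Fintype.sum_prod_type]
    apply Finset.sum_congr rfl
    intro a _
    calc _ = ∑ b : (ZMod p)ˣ, ∑ d : (ZMod p)ˣ, ∑ c : (ZMod p)ˣ, (if tau p a + tau p b = tau p c + tau p d then 1 else 0) := by
            apply Finset.sum_congr rfl; intro b _; exact Finset.sum_comm
      _ = _ := Finset.sum_comm
  rw [e]
  calc ∑ a : (ZMod p)ˣ, ∑ d : (ZMod p)ˣ, _ ≤ ∑ a : (ZMod p)ˣ, ∑ d : (ZMod p)ˣ, (M + if a = d then (p - 1) else 0) := by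
        apply Finset.sum_le_sum; intro a _
        apply Finset.sum_le_sum; intro d _
        split_ifs with h
        · subst h
          refine le_trans ?_ (Nat.le_add_left _ _)
          rw [← hc, ← Finset.card_univ]
          apply Finset.card_le_card_of_injOn (fun q => q.1) (fun _ _ => Finset.mem_coe.mpr (mem_univ _))
          intro q hq q' hq' hqq
          simp only [coe_filter, mem_univ, true_and, Set.mem_ofPred_eq] at hq hq' hqq
          have h1 : tau p q.1 = tau p q.2 := by linear_combination hq
          have h2 : tau p q'.1 = tau p q'.2 := by linear_combination hq'
          have h1 := Units.ext (tau_injective p h1)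
          have h2 := Units.ext (tau_injective p h2)
          exact Prod.ext hqq (by rw [← h1, ← h2, hqq])
        · exact energy_fiber p hp2 M hM a d h
    _ = (p - 1) ^ 2 * (M + 1) := by
        simp only [Finset.sum_add_distrib, Finset.sum_const, Finset.card_univ, hc, Finset.sum_ite_eq, mem_univ, if_true, smul_eq_mul]
        ring

lemma heil_fourth (p : ℕ) [hp : Fact p.Prime] (hp2 : p ≠ 2) (M : ℕ)
    (hM : ∀ r : ZMod p, (univ.filter (fun x : ZMod p => x ≠ 0 ∧ x ≠ 1 ∧ (truncLog p).eval x = r)).card ≤ M)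
    (k : ZMod (p ^ 2)) (hk : IsUnit k) :
    ‖∑ u : (ZMod p)ˣ, (ZMod.stdAddChar (k * tau p u) : ℂ)‖ ^ 4 ≤ (p : ℝ) ^ 3 * (M + 1) := by
  classical
  have hp1 := hp.out.one_lt
  set H : ZMod (p ^ 2) → ℂ := fun l => ∑ u : (ZMod p)ˣ, (ZMod.stdAddChar (1 * tau p u * l) : ℂ) with hH
  have hHk : ∑ u : (ZMod p)ˣ, (ZMod.stdAddChar (k * tau p u) : ℂ) = H k := by
    simp only [hH, one_mul, mul_comm]
  rw [hHk]
  have h1 := parseval_gen (fun a v : ZMod (p ^ 2) => (ZMod.stdAddChar (1 * a * v) : ℂ))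
    (std_orth (p ^ 2) 1 isUnit_one) (univ : Finset ((ZMod p)ˣ × (ZMod p)ˣ)) (fun x => tau p x.1 + tau p x.2)
  have h2 : ∀ v, ∑ x : (ZMod p)ˣ × (ZMod p)ˣ, (ZMod.stdAddChar (1 * (tau p x.1 + tau p x.2) * v) : ℂ) = H v ^ 2 := by
    intro v
    rw [pow_two (H v), hH, Finset.sum_mul_sum, Fintype.sum_prod_type]
    apply Finset.sum_congr rfl; intro a _
    apply Finset.sum_congr rfl; intro b _
    rw [← AddChar.map_add_eq_mul]; congr 1; ring
  simp only [h2] at h1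
  have h3 := energy_bound p hp2 M hM
  have h3' : (∑ x : (ZMod p)ˣ × (ZMod p)ˣ, ((univ.filter (fun y : (ZMod p)ˣ × (ZMod p)ˣ =>
      tau p x.1 + tau p x.2 = tau p y.1 + tau p y.2)).card : ℝ)) ≤ ((p:ℝ) - 1) ^ 2 * (M + 1) := by
    have := (Nat.cast_le (α := ℝ)).mpr h3
    push_cast [Nat.cast_sub hp1.le] at this
    exact this
  have hinv : ∀ u : (ZMod p)ˣ, H (k * tau p u) = H k := by
    intro u
    simp only [hH]
    apply Fintype.sum_equiv (Equiv.mulRight u)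
    intro x
    congr 1
    simp only [Equiv.coe_mulRight, Units.val_mul, map_mul]; ring
  have h4 : ((p : ℝ) - 1) * ‖H k‖ ^ 4 ≤ ∑ v, ‖H v ^ 2‖ ^ 2 := by
    calc ((p : ℝ) - 1) * ‖H k‖ ^ 4 = ∑ u : (ZMod p)ˣ, ‖H (k * tau p u) ^ 2‖ ^ 2 := by
          simp only [hinv, Finset.sum_const, Finset.card_univ, ZMod.card_units, nsmul_eq_mul, norm_pow]
          rw [Nat.cast_sub hp1.le]; push_cast; ring
      _ = ∑ v ∈ univ.image (fun u : (ZMod p)ˣ => k * tau p u), ‖H v ^ 2‖ ^ 2 := by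
          rw [Finset.sum_image]
          intro u _ u' _ h
          exact Units.ext (tau_injective p (hk.mul_left_cancel h))
      _ ≤ _ := Finset.sum_le_sum_of_subset_of_nonneg (Finset.subset_univ _) (fun _ _ _ => by positivity)
  rw [h1, ZMod.card] at h4
  have hp1' : (0:ℝ) < (p:ℝ) - 1 := by
    have : (1:ℝ) < p := by exact_mod_cast hp1
    linarith
  have h5 : ((p : ℝ) - 1) * ‖H k‖ ^ 4 ≤ ((p : ℝ) - 1) * ((p : ℝ) ^ 2 * (((p:ℝ) - 1) * (M + 1))) := by
    refine h4.trans ?_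
    push_cast
    calc _ ≤ (p:ℝ) ^ 2 * (((p:ℝ) - 1) ^ 2 * (M + 1)) := by gcongr
      _ = _ := by ring
  have h6 := le_of_mul_le_mul_left h5 hp1'
  refine h6.trans ?_
  have : (0:ℝ) ≤ (p:ℝ)^2 * (M+1) := by positivity
  nlinarith

lemma exp_one_mul_le_exp (x : ℝ) : Real.exp 1 * x ≤ Real.exp x := by
  have h := Real.add_one_le_exp (x - 1)
  have : Real.exp x = Real.exp 1 * Real.exp (x - 1) := by rw [← Real.exp_add]; congr 1; ring
  rw [this]
  have := Real.exp_pos 1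
  nlinarith

lemma level_bound (p b : ℕ) [hp : Fact p.Prime] (hb : 22 ≤ b) (hbp : b ^ 3 ≤ p) (r : ZMod p) :
    (univ.filter (fun x : ZMod p => x ≠ 0 ∧ x ≠ 1 ∧ (truncLog p).eval x = r)).card * (b ^ 2 / 2) ≤ p * (b + b) := by
  have hbb : b ^ 2 ≤ p / b := by
    rw [Nat.le_div_iff_mul_le (by omega)]
    calc b ^ 2 * b = b ^ 3 := by ring
      _ ≤ p := hbp
  have hb1 : b ≤ p := by nlinarith [Nat.div_le_self p b]
  have hA : p / b * b ≤ p := Nat.div_mul_le_self p b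
  apply stepanov p (p / b) b b (b ^ 2 / 2) (Nat.div_le_self p b) hb1 hA
  · have := Nat.div_le_self p b; omega
  · have : 1 ≤ b ^ 2 := Nat.one_le_pow _ _ (by omega)
    omega
  · omega
  · omega
  · set A := p / b
    set D := b ^ 2 / 2
    have hD : 2 * D ≤ b ^ 2 := by omega
    have hD0 : 0 < D := by
      have : 22 * 22 ≤ b ^ 2 := by nlinarith
      omega
    have h1 : A + b + b + D + 1 < 2 * A := by
      have : 22 * b ≤ b ^ 2 := by nlinarith
      omega
    calc D * (A + b + b + D + 1) < D * (2 * A) := Nat.mul_lt_mul_of_pos_left h1 hD0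
      _ = (2 * D) * A := by ring
      _ ≤ b ^ 2 * A := Nat.mul_le_mul_right _ hD
      _ = A * b * b := by ring
  · intro x hx
    rw [mem_filter] at hx
    exact hx.2

lemma heil_final (p : ℕ) [hp : Fact p.Prime] (hT : 10 ≤ Real.log (2 * p)) (k : ZMod (p ^ 2)) (hk : IsUnit k) :
    Real.log (2 * p) * ‖∑ u : (ZMod p)ˣ, (ZMod.stdAddChar (k * tau p u) : ℂ)‖ ≤ 9 * p := by
  set T := Real.log (2 * p) with hTdef
  have hp0 : (0:ℝ) < p := by exact_mod_cast hp.out.pos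
  have hexp : Real.exp T = 2 * p := Real.exp_log (by positivity)
  have he := Real.exp_one_gt_d9
  have hbig : (10648 : ℝ) ≤ p := by
    have h1 : Real.exp 10 ≤ 2 * p := by rw [← hexp]; exact Real.exp_le_exp.mpr hT
    have h2 : Real.exp 10 = Real.exp 1 ^ 10 := by rw [← Real.exp_nat_mul]; norm_num
    have h3 : (2.718 : ℝ) ^ 10 ≤ Real.exp 1 ^ 10 := by gcongr; linarith
    rw [h2] at h1
    have h4 : (21296 : ℝ) ≤ (2.718 : ℝ) ^ 10 := by norm_num
    linarith
  have hbigN : 10648 ≤ p := by exact_mod_cast hbig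
  obtain ⟨b, hb1, hb2⟩ : ∃ b : ℕ, b ^ 3 ≤ p ∧ p < (b + 1) ^ 3 := by
    refine ⟨Nat.findGreatest (fun b => b ^ 3 ≤ p) p, ?_, ?_⟩
    · exact Nat.findGreatest_spec (P := fun b => b ^ 3 ≤ p) (Nat.zero_le p) (by simp)
    · by_contra h
      push Not at h
      have h1 : Nat.findGreatest (fun b => b ^ 3 ≤ p) p + 1 ≤ p := by
        refine le_trans ?_ h
        exact Nat.le_self_pow (by norm_num) _
      have := Nat.le_findGreatest (P := fun b => b ^ 3 ≤ p) h1 h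
      omega
  have hb : 22 ≤ b := by
    by_contra h
    have : (b + 1) ^ 3 ≤ 22 ^ 3 := Nat.pow_le_pow_left (by omega) 3
    omega
  set M := univ.sup (fun r : ZMod p => (univ.filter (fun x : ZMod p => x ≠ 0 ∧ x ≠ 1 ∧ (truncLog p).eval x = r)).card) with hMdef
  have hM : ∀ r : ZMod p, (univ.filter (fun x : ZMod p => x ≠ 0 ∧ x ≠ 1 ∧ (truncLog p).eval x = r)).card ≤ M := by
    intro r
    exact Finset.le_sup (f := fun r : ZMod p => (univ.filter (fun x : ZMod p => x ≠ 0 ∧ x ≠ 1 ∧ (truncLog p).eval x = r)).card) (mem_univ r)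
  obtain ⟨r, _, hr⟩ := Finset.exists_mem_eq_sup (univ : Finset (ZMod p)) univ_nonempty (fun r : ZMod p => (univ.filter (fun x : ZMod p => x ≠ 0 ∧ x ≠ 1 ∧ (truncLog p).eval x = r)).card)
  have hMb : M * (b ^ 2 / 2) ≤ p * (b + b) := by
    rw [hMdef, hr]; exact level_bound p b hb hb1 r
  have hfour := heil_fourth p (by omega) M hM k hk
  set H := ‖∑ u : (ZMod p)ˣ, (ZMod.stdAddChar (k * tau p u) : ℂ)‖ with hH
  have hbR : (22 : ℝ) ≤ b := by exact_mod_cast hb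
  have hM2 : (M + 1 : ℝ) * b ≤ 5 * p := by
    have h1 : b ^ 2 ≤ 2 * (b ^ 2 / 2) + 1 := by omega
    have h2 : M * b ^ 2 ≤ 4 * (p * b) + M := by nlinarith
    have h3 : (M * b ^ 2 : ℝ) ≤ 4 * (p * b) + M := by exact_mod_cast h2
    have h4 : (b ^ 3 : ℝ) ≤ p := by exact_mod_cast hb1
    have h5 : (M : ℝ) * b ≤ 4.1 * p := by
      have h6 : (M * b : ℝ) * (b^2 - 1) ≤ 4.1 * p * (b ^ 2 - 1) := by
        have : (484 : ℝ) ≤ b ^ 2 := by nlinarith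
        have h7 : (M * b ^ 2 : ℝ) * b ≤ (4 * (p * b) + M) * b := by gcongr
        nlinarith
      exact le_of_mul_le_mul_right h6 (by nlinarith)
    have h8 : (b : ℝ) ≤ 0.1 * p := by nlinarith
    linarith
  have hT4 : T ^ 4 ≤ 1312 * b := by
    by_contra hcon
    push Not at hcon
    have h1 : Real.exp 1 * (T / 12) ≤ Real.exp (T / 12) := exp_one_mul_le_exp _
    have h2 : Real.exp T = Real.exp (T / 12) ^ 12 := by rw [← Real.exp_nat_mul]; congr 1; push_cast; ring
    have h3 : (2.718 * (T / 12)) ^ 12 ≤ Real.exp T := by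
      rw [h2]; gcongr
      refine le_trans ?_ h1
      gcongr; linarith
    rw [hexp] at h3
    have h4 : (2.718 * (T / 12)) ^ 12 = (2.718 / 12) ^ 12 * (T ^ 4) ^ 3 := by ring
    rw [h4] at h3
    have h5 : (1312 * b : ℝ) ^ 3 ≤ (T ^ 4) ^ 3 := by gcongr
    have h6 : (p : ℝ) ≤ (b + 1) ^ 3 := by exact_mod_cast hb2.le
    have h7 : ((b:ℝ) + 1) ^ 3 ≤ (1.1 * b) ^ 3 := by gcongr; linarith
    have h8 : (2.718 / 12) ^ 12 * (1312 * b : ℝ) ^ 3 ≤ 2 * (1.1 * b) ^ 3 := by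
      calc _ ≤ (2.718 / 12) ^ 12 * (T ^ 4) ^ 3 := by gcongr
        _ ≤ _ := by linarith
    have h9 : (0:ℝ) < (b:ℝ) ^ 3 := by positivity
    rw [mul_pow, mul_pow] at h8
    have h10 : (2.718 / 12 : ℝ) ^ 12 * 1312 ^ 3 ≤ 2 * 1.1 ^ 3 := by
      refine le_of_mul_le_mul_right ?_ h9
      linarith
    norm_num at h10
  have hfin : (T * H) ^ 4 ≤ (9 * p) ^ 4 := by
    rw [mul_pow]
    calc T ^ 4 * H ^ 4 ≤ (1312 * b) * ((p : ℝ) ^ 3 * (M + 1)) := by gcongr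
      _ = 1312 * (p : ℝ) ^ 3 * (((M : ℝ) + 1) * b) := by ring
      _ ≤ 1312 * (p : ℝ) ^ 3 * (5 * p) := by gcongr
      _ ≤ (9 * (p : ℝ)) ^ 4 := by
        have : (0:ℝ) < (p:ℝ) ^ 4 := by positivity
        nlinarith
  exact le_of_pow_le_pow_left₀ (by norm_num) (by positivity) hfin

/-- substitution along a generic line through `z` -/
def lineSub {ι F : Type*} [Field F] (z : ι → F) (L : ι → MvPolynomial ι F) :
    MvPolynomial ι F →ₐ[F] Polynomial (MvPolynomial ι F) :=
  MvPolynomial.aeval (fun j => Polynomial.C (MvPolynomial.C (z j)) + Polynomial.X * Polynomial.C (L j))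

lemma lineSub_coeff {ι F : Type*} [Fintype ι] [DecidableEq ι] [Field F] (z : ι → F) (L : ι → MvPolynomial ι F)
    (f : MvPolynomial ι F) :
    (lineSub z L f).coeff 0 = MvPolynomial.C (MvPolynomial.eval z f) ∧
    (lineSub z L f).coeff 1 = ∑ j, MvPolynomial.C (MvPolynomial.eval z (MvPolynomial.pderiv j f)) * L j := by
  induction f using MvPolynomial.induction_on with
  | C a =>
    have h : lineSub z L (MvPolynomial.C a) = Polynomial.C (MvPolynomial.C a) := by
      unfold lineSub
      rw [MvPolynomial.aeval_C]; rfl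
    rw [h]
    constructor
    · simp
    · rw [Polynomial.coeff_C]; simp
  | add f g hf hg =>
    constructor
    · simp [hf.1, hg.1]
    · simp [hf.2, hg.2, add_mul, Finset.sum_add_distrib]
  | mul_X f i hf =>
    have h : lineSub z L (MvPolynomial.X i) = Polynomial.C (MvPolynomial.C (z i)) + Polynomial.X * Polynomial.C (L i) := by
      unfold lineSub; rw [MvPolynomial.aeval_X]
    have h0 : (lineSub z L (MvPolynomial.X i)).coeff 0 = MvPolynomial.C (z i) := by
      rw [h]; simp
    have h1 : (lineSub z L (MvPolynomial.X i)).coeff 1 = L i := by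
      rw [h, Polynomial.coeff_add, Polynomial.coeff_C, Polynomial.coeff_X_mul]; simp
    constructor
    · rw [map_mul, Polynomial.mul_coeff_zero, hf.1, h0]; simp
    · rw [map_mul, Polynomial.mul_coeff_one, hf.1, hf.2, h0, h1]
      simp only [Derivation.leibniz, smul_eq_mul, map_add, map_mul, MvPolynomial.pderiv_X, MvPolynomial.eval_X]
      simp only [add_mul, Finset.sum_add_distrib]
      congr 1
      · rw [Finset.sum_eq_single i]
        · simp
        · intro j _ hj
          simp [Pi.single_apply, hj, hj.symm]
        · simp
      · rw [Finset.sum_mul]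
        apply Finset.sum_congr rfl
        intro j _; ring

lemma bezout_indep {ι F : Type*} [Fintype ι] [DecidableEq ι] [Field F] [DecidableEq F] [Fintype F]
    (f : ι → MvPolynomial ι F) (Z : Finset (ι → F))
    (hZ : ∀ z ∈ Z, (∀ i, MvPolynomial.eval z (f i) = 0) ∧
      (Matrix.of fun i j => MvPolynomial.eval z (MvPolynomial.pderiv j (f i))).det ≠ 0)
    (A : ℕ) (c : Z × (ι → Fin A) → F)
    (hc : ∑ x : Z × (ι → Fin A), c x • (MvPolynomial.indicator x.1.1 * ∏ i, f i ^ (x.2 i : ℕ)) = 0) :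
    c = 0 := by
  classical
  by_contra hne
  have hex : ∃ x, c x ≠ 0 := by
    by_contra h; push Not at h; exact hne (funext h)
  obtain ⟨x0, hx0, hmin⟩ := Finset.exists_min_image (univ.filter (fun x => c x ≠ 0))
    (fun x => ∑ i, (x.2 i : ℕ)) (by obtain ⟨x, hx⟩ := hex; exact ⟨x, by simp [hx]⟩)
  rw [mem_filter] at hx0
  set m := ∑ i, (x0.2 i : ℕ) with hm
  set z := x0.1.1 with hz
  obtain ⟨hzero, hdet⟩ := hZ z x0.1.2
  set J : Matrix ι ι F := Matrix.of fun i j => MvPolynomial.eval z (MvPolynomial.pderiv j (f i)) with hJ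
  let L : ι → MvPolynomial ι F := fun j => ∑ k, MvPolynomial.C (J⁻¹ j k) * MvPolynomial.X k
  have hJJ : J * J⁻¹ = 1 := Matrix.mul_nonsing_inv J (isUnit_iff_ne_zero.mpr hdet)
  have hf : ∀ i, ∃ h : Polynomial (MvPolynomial ι F), lineSub z L (f i) = Polynomial.X * h ∧ h.coeff 0 = MvPolynomial.X i := by
    intro i
    obtain ⟨h0, h1⟩ := lineSub_coeff z L (f i)
    rw [hzero i, map_zero] at h0
    obtain ⟨h, hh⟩ := Polynomial.X_dvd_iff.mpr h0
    refine ⟨h, hh, ?_⟩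
    rw [hh, Polynomial.coeff_X_mul] at h1
    rw [h1]
    simp only [L, Finset.mul_sum]
    rw [Finset.sum_comm]
    have h2 : ∀ k, ∑ j, MvPolynomial.C (MvPolynomial.eval z (MvPolynomial.pderiv j (f i))) * (MvPolynomial.C (J⁻¹ j k) * MvPolynomial.X k)
        = MvPolynomial.C ((J * J⁻¹) i k) * MvPolynomial.X k := by
      intro k
      rw [Matrix.mul_apply, map_sum, Finset.sum_mul]
      apply Finset.sum_congr rfl
      intro j _
      rw [map_mul, hJ, Matrix.of_apply]; ring
    simp only [h2, hJJ, Matrix.one_apply]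
    simp
  choose h hh1 hh2 using hf
  have hsub := congrArg (fun q => (lineSub z L q).coeff m) hc
  simp only [map_sum, map_smul, map_mul, map_prod, map_pow, hh1, map_zero, Polynomial.coeff_zero,
    Polynomial.finsetSum_coeff, Polynomial.coeff_smul, mul_pow, Finset.prod_mul_distrib,
    Finset.prod_pow_eq_pow_sum] at hsub
  have hterm : ∀ x : Z × (ι → Fin A), c x • (lineSub z L (MvPolynomial.indicator x.1.1) *
      (Polynomial.X ^ (∑ i, (x.2 i : ℕ)) * ∏ i, h i ^ (x.2 i : ℕ))).coeff m =
      MvPolynomial.monomial (Finsupp.equivFunOnFinite.symm (fun i => (x.2 i : ℕ)))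
        (if x.1 = x0.1 ∧ ∑ i, (x.2 i : ℕ) = m then c x else 0) := by
    intro x
    by_cases hcx : c x = 0
    · simp [hcx]
    have hmx : m ≤ ∑ i, (x.2 i : ℕ) := hmin x (by simp [hcx])
    rw [mul_left_comm, Polynomial.coeff_X_pow_mul']
    by_cases heq : ∑ i, (x.2 i : ℕ) = m
    · rw [if_pos heq.le, heq, Nat.sub_self, Polynomial.mul_coeff_zero, (lineSub_coeff z L _).1]
      have h3 : (∏ i, h i ^ (x.2 i : ℕ)).coeff 0 = ∏ i, MvPolynomial.X i ^ (x.2 i : ℕ) := by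
        rw [Polynomial.coeff_zero_prod]
        apply Finset.prod_congr rfl
        intro i _
        rw [Polynomial.coeff_zero_eq_eval_zero, Polynomial.eval_pow, ← Polynomial.coeff_zero_eq_eval_zero, hh2]
      rw [h3]
      by_cases hxz : x.1 = x0.1
      · rw [hxz, MvPolynomial.eval_indicator_apply_eq_one, if_pos ⟨rfl, rfl⟩, MvPolynomial.monomial_eq,
          Finsupp.prod_fintype _ _ (by simp), MvPolynomial.smul_eq_C_mul]
        simp
      · rw [MvPolynomial.eval_indicator_apply_eq_zero _ _ (fun hcon => hxz (Subtype.ext hcon.symm)), if_neg (fun hcon => hxz hcon.1)]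
        simp
    · rw [if_neg (by omega), if_neg (fun hcon => heq hcon.2)]
      simp
  simp only [hterm] at hsub
  have hco := congrArg (fun q => MvPolynomial.coeff (Finsupp.equivFunOnFinite.symm (fun i => (x0.2 i : ℕ))) q) hsub
  simp only [MvPolynomial.coeff_sum, MvPolynomial.coeff_monomial, MvPolynomial.coeff_zero] at hco
  rw [Finset.sum_eq_single x0] at hco
  · simp only [if_true] at hco
    rw [if_pos ⟨trivial, hm.symm⟩] at hco
    exact hx0.2 hco
  · intro x _ hx
    split_ifs with h1 h2
    · exfalso
      apply hx
      refine Prod.ext h2.1 ?_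
      funext i
      have := congrFun (Finsupp.equivFunOnFinite.symm.injective h1) i
      exact Fin.ext this
    · rfl
    · rfl
  · simp

lemma bezout_count {ι F : Type*} [Fintype ι] [DecidableEq ι] [Field F] [DecidableEq F] [Fintype F]
    (f : ι → MvPolynomial ι F) (Z : Finset (ι → F))
    (hZ : ∀ z ∈ Z, (∀ i, MvPolynomial.eval z (f i) = 0) ∧
      (Matrix.of fun i j => MvPolynomial.eval z (MvPolynomial.pderiv j (f i))).det ≠ 0)
    (B : ℕ) (hB : ∀ j, ∑ i, MvPolynomial.degreeOf j (f i) ≤ B) (A : ℕ) :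
    Z.card * A ^ (Fintype.card ι) ≤ (Fintype.card F + A * B + 1) ^ (Fintype.card ι) := by
  classical
  set D := Fintype.card F + A * B with hD
  let Λ : (Z × (ι → Fin A) → F) →ₗ[F] MvPolynomial ι F :=
    Fintype.linearCombination F (fun x : Z × (ι → Fin A) => MvPolynomial.indicator x.1.1 * ∏ i, f i ^ (x.2 i : ℕ))
  let co : MvPolynomial ι F →ₗ[F] ((ι → Fin (D + 1)) → F) :=
    LinearMap.pi (fun s => MvPolynomial.lcoeff F (Finsupp.equivFunOnFinite.symm (fun i => (s i : ℕ))))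
  have hdeg : ∀ c j, MvPolynomial.degreeOf j (Λ c) ≤ D := by
    intro c j
    simp only [Λ]
    rw [Fintype.linearCombination_apply]
    refine (MvPolynomial.degreeOf_sum_le _ _ _).trans ?_
    apply Finset.sup_le
    intro x _
    rw [MvPolynomial.smul_eq_C_mul]
    refine (MvPolynomial.degreeOf_C_mul_le _ _ _).trans ?_
    refine (MvPolynomial.degreeOf_mul_le _ _ _).trans ?_
    apply Nat.add_le_add
    · have h1 := MvPolynomial.indicator_mem_restrictDegree x.1.1
      rw [MvPolynomial.mem_restrictDegree] at h1
      rw [MvPolynomial.degreeOf_le_iff]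
      intro s hs
      exact (h1 s hs j).trans (Nat.sub_le _ _)
    · refine (MvPolynomial.degreeOf_prod_le _ _ _).trans ?_
      calc ∑ i, MvPolynomial.degreeOf j (f i ^ (x.2 i : ℕ)) ≤ ∑ i, A * MvPolynomial.degreeOf j (f i) := by
            apply Finset.sum_le_sum
            intro i _
            refine (MvPolynomial.degreeOf_pow_le _ _ _).trans ?_
            exact Nat.mul_le_mul_right _ (x.2 i).2.le
        _ ≤ A * B := by
            rw [← Finset.mul_sum]; exact Nat.mul_le_mul_left _ (hB j)
  have hinj : Function.Injective (co ∘ₗ Λ) := by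
    rw [← LinearMap.ker_eq_bot, LinearMap.ker_eq_bot']
    intro c hc
    apply bezout_indep f Z hZ A c
    rw [← Fintype.linearCombination_apply]
    change Λ c = 0
    ext s
    rw [MvPolynomial.coeff_zero]
    by_cases hs : ∀ i, s i < D + 1
    · have := congrFun hc (fun i => ⟨s i, hs i⟩)
      simp only [co, LinearMap.comp_apply, LinearMap.pi_apply, MvPolynomial.lcoeff_apply, Pi.zero_apply] at this
      rw [← this]
      congr 1
      ext i; simp
    · push Not at hs
      obtain ⟨i, hi⟩ := hs
      by_contra hne
      have := (MvPolynomial.degreeOf_le_iff.mp (hdeg c i)) s (MvPolynomial.mem_support_iff.mpr hne)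
      omega
  have := LinearMap.finrank_le_finrank_of_injective hinj
  simpa using this

lemma bezout {ι F : Type*} [Fintype ι] [DecidableEq ι] [Field F] [DecidableEq F] [Fintype F]
    (f : ι → MvPolynomial ι F) (Z : Finset (ι → F))
    (hZ : ∀ z ∈ Z, (∀ i, MvPolynomial.eval z (f i) = 0) ∧
      (Matrix.of fun i j => MvPolynomial.eval z (MvPolynomial.pderiv j (f i))).det ≠ 0)
    (B : ℕ) (hB : ∀ j, ∑ i, MvPolynomial.degreeOf j (f i) ≤ B) :
    Z.card ≤ B ^ (Fintype.card ι) := by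
  set n := Fintype.card ι
  set K : ℝ := (Fintype.card F : ℝ) + 1
  have h1 : ∀ A : ℕ, 1 ≤ A → (Z.card : ℝ) ≤ (K * (1 / (A : ℝ)) + B) ^ n := by
    intro A hA
    have h := bezout_count f Z hZ B hB A
    have h2 : (Z.card : ℝ) * A ^ n ≤ (Fintype.card F + A * B + 1) ^ n := by exact_mod_cast h
    have hA' : (0:ℝ) < A := by exact_mod_cast hA
    have e : (K * (1 / (A : ℝ)) + B) ^ n = (Fintype.card F + A * B + 1) ^ n / A ^ n := by
      rw [← div_pow]; congr 1; simp only [K]; field_simp; ring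
    rw [e, le_div_iff₀ (by positivity)]
    exact h2
  have h2 : Filter.Tendsto (fun A : ℕ => (K * (1 / (A : ℝ)) + B) ^ n) Filter.atTop (nhds ((K * 0 + B) ^ n)) :=
    ((tendsto_one_div_atTop_nhds_zero_nat.const_mul K).add_const (B : ℝ)).pow n
  have h3 := ge_of_tendsto h2 (Filter.eventually_atTop.mpr ⟨1, h1⟩)
  rw [mul_zero, zero_add] at h3
  exact_mod_cast h3

/-- tangent vector -/
def phiv {F : Type*} [Field F] (J : Finset ℕ) (v : F) : Option J → F
  | none => 1
  | some j => v ^ (j.1 + 1)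

/-- the polynomial system -/
def sysPoly {F : Type*} [Field F] (J : Finset ℕ) (s : Option J → F) : Option J → MvPolynomial (Option J) F
  | none => (∑ i, ∏ l ∈ univ.erase i, MvPolynomial.X l) - MvPolynomial.C (s none) * ∏ l, MvPolynomial.X l
  | some j => (∑ i, MvPolynomial.X i ^ j.1) - MvPolynomial.C (s (some j))

lemma pderiv_prod_X {ι F : Type*} [DecidableEq ι] [Field F] (k : ι) (S : Finset ι) :
    MvPolynomial.pderiv k (∏ l ∈ S, (MvPolynomial.X l : MvPolynomial ι F)) =
      if k ∈ S then ∏ l ∈ S.erase k, MvPolynomial.X l else 0 := by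
  induction S using Finset.induction_on with
  | empty => simp
  | insert a S ha ih =>
    rw [Finset.prod_insert ha, Derivation.leibniz, ih, MvPolynomial.pderiv_X]
    simp only [smul_eq_mul]
    by_cases hka : k = a
    · subst hka
      rw [if_neg ha]
      simp [ha]
    · rw [Pi.single_eq_of_ne (fun h => hka h.symm)]
      by_cases hkS : k ∈ S
      · rw [if_pos hkS, if_pos (mem_insert_of_mem hkS), Finset.erase_insert_of_ne (fun h => hka h.symm),
          Finset.prod_insert (by simp [ha])]
        simp
      · rw [if_neg hkS, if_neg (by simp [hka, hkS])]
        simp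

lemma degreeOf_prod_X_le {ι F : Type*} [DecidableEq ι] [Field F] (k : ι) (S : Finset ι) :
    MvPolynomial.degreeOf k (∏ l ∈ S, (MvPolynomial.X l : MvPolynomial ι F)) ≤ 1 := by
  refine (MvPolynomial.degreeOf_prod_le _ _ _).trans ?_
  simp only [MvPolynomial.degreeOf_X]
  rw [Finset.sum_ite_eq]
  split_ifs <;> simp

lemma sys_degree {F : Type*} [Field F] (J : Finset ℕ) (s : Option J → F) (k : Option J) :
    ∑ i, MvPolynomial.degreeOf k (sysPoly J s i) ≤ 1 + ∑ j ∈ J, j := by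
  classical
  rw [Fintype.sum_option]
  apply Nat.add_le_add
  · unfold sysPoly
    refine (MvPolynomial.degreeOf_sub_le _ _ _).trans (max_le ?_ ?_)
    · refine (MvPolynomial.degreeOf_sum_le _ _ _).trans (Finset.sup_le ?_)
      intro i _
      exact degreeOf_prod_X_le _ _
    · exact (MvPolynomial.degreeOf_C_mul_le _ _ _).trans (degreeOf_prod_X_le _ _)
  · rw [← Finset.sum_coe_sort J (fun j => j)]
    apply Finset.sum_le_sum
    intro j _
    unfold sysPoly
    refine (MvPolynomial.degreeOf_sub_le _ _ _).trans (max_le ?_ ?_)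
    · refine (MvPolynomial.degreeOf_sum_le _ _ _).trans (Finset.sup_le ?_)
      intro i _
      refine (MvPolynomial.degreeOf_pow_le _ _ _).trans ?_
      rw [MvPolynomial.degreeOf_X]
      split_ifs <;> simp
    · simp

lemma sys_jac {F : Type*} [Field F] (J : Finset ℕ) (hJ : ∀ j ∈ J, (j : F) ≠ 0)
    (s : Option J → F) (z : Option J → F) (hz : ∀ i, z i ≠ 0)
    (h0 : ∑ i, (z i)⁻¹ = s none) (hli : LinearIndependent F (fun i => phiv J (z i))) :
    (Matrix.of fun i j => MvPolynomial.eval z (MvPolynomial.pderiv j (sysPoly J s i))).det ≠ 0 := by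
  classical
  set Pz := ∏ i, z i with hPz
  have hP0 : Pz ≠ 0 := Finset.prod_ne_zero_iff.mpr (fun i _ => hz i)
  let D1 : Option J → F := fun e => match e with
    | none => - Pz
    | some j => (j.1 : F)
  let D2 : Option J → F := fun k => ((z k) ^ 2)⁻¹
  have herase : ∀ k, ∏ l ∈ univ.erase k, z l = Pz * (z k)⁻¹ := by
    intro k
    rw [hPz, ← Finset.mul_prod_erase univ z (mem_univ k)]
    field_simp [hz k]
  have heq : (Matrix.of fun i j => MvPolynomial.eval z (MvPolynomial.pderiv j (sysPoly J s i))) =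
      Matrix.diagonal D1 * (Matrix.of (fun i => phiv J (z i))).transpose * Matrix.diagonal D2 := by
    ext e k
    rw [Matrix.mul_diagonal, Matrix.diagonal_mul, Matrix.of_apply, Matrix.transpose_apply, Matrix.of_apply]
    rcases e with _ | j
    · simp only [sysPoly, map_sub, map_sum, Derivation.leibniz, MvPolynomial.pderiv_C, pderiv_prod_X,
        smul_eq_mul, mem_univ, if_true]
      simp only [mul_zero, add_zero, map_mul, map_prod, MvPolynomial.eval_C, MvPolynomial.eval_X]
      rw [herase]
      have h1 : ∀ i, MvPolynomial.eval z (if k ∈ univ.erase i then ∏ l ∈ (univ.erase i).erase k, (MvPolynomial.X l : MvPolynomial (Option J) F) else 0)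
          = if i = k then 0 else Pz * (z k)⁻¹ * (z i)⁻¹ := by
        intro i
        by_cases hik : i = k
        · subst hik; simp
        · rw [if_pos (by simp [Ne.symm hik]), if_neg hik, map_prod]
          simp only [MvPolynomial.eval_X]
          have h2 : k ∈ univ.erase i := by simp [Ne.symm hik]
          have h3 := Finset.mul_prod_erase (univ.erase i) z h2
          rw [herase i] at h3
          have := hz k
          have := hz i
          field_simp at h3 ⊢
          linear_combination h3
      simp only [h1]
      have h4 : ∑ i, (if i = k then 0 else Pz * (z k)⁻¹ * (z i)⁻¹) = Pz * (z k)⁻¹ * (s none) - Pz * (z k)⁻¹ * (z k)⁻¹ := by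
        rw [← h0, Finset.mul_sum, ← Finset.add_sum_erase univ _ (mem_univ k), if_pos rfl, zero_add,
          ← Finset.add_sum_erase univ (fun i => Pz * (z k)⁻¹ * (z i)⁻¹) (mem_univ k), add_sub_cancel_left]
        apply Finset.sum_congr rfl
        intro i hi
        rw [if_neg (Finset.ne_of_mem_erase hi)]
      rw [h4]
      simp only [phiv, D1, D2]
      have := hz k
      field_simp
      ring
    · simp only [sysPoly, map_sub, map_sum, MvPolynomial.pderiv_C, sub_zero, Derivation.leibniz_pow, MvPolynomial.pderiv_X]
      rw [Finset.sum_eq_single k]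
      · simp [phiv, D1, D2]
        have h5 : j.1 ≠ 0 := by
          intro h; apply hJ j.1 j.2; rw [h]; simp
        have := hz k
        obtain ⟨a, ha⟩ := Nat.exists_eq_succ_of_ne_zero h5
        rw [ha]
        simp only [Nat.succ_eq_add_one, Nat.add_sub_cancel]
        field_simp
        ring
      · intro i _ hi
        simp [hi]
      · simp
  rw [heq, Matrix.det_mul, Matrix.det_mul, Matrix.det_diagonal, Matrix.det_diagonal, Matrix.det_transpose]
  refine mul_ne_zero (mul_ne_zero ?_ ?_) ?_
  · rw [Finset.prod_ne_zero_iff]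
    intro e _
    rcases e with _ | j
    · exact neg_ne_zero.mpr hP0
    · exact hJ j.1 j.2
  · have := (Matrix.linearIndependent_rows_iff_isUnit (A := Matrix.of (fun i => phiv J (z i)))).mp hli
    exact ((Matrix.isUnit_iff_isUnit_det _).mp this).ne_zero
  · rw [Finset.prod_ne_zero_iff]
    intro e _
    exact inv_ne_zero (pow_ne_zero _ (hz e))

lemma sys_count {F : Type*} [Field F] [Fintype F] [DecidableEq F] (J : Finset ℕ) (hJ : ∀ j ∈ J, (j : F) ≠ 0)
    (s : Option J → F) (Z : Finset (Option J → F))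
    (hZ : ∀ z ∈ Z, (∀ i, z i ≠ 0) ∧ ∑ i, (z i)⁻¹ = s none ∧ (∀ j : J, ∑ i, z i ^ j.1 = s (some j)) ∧
      LinearIndependent F (fun i => phiv J (z i))) :
    Z.card ≤ (1 + ∑ j ∈ J, j) ^ (J.card + 1) := by
  classical
  have h := bezout (sysPoly J s) Z (fun z hz => by
    obtain ⟨h1, h2, h3, h4⟩ := hZ z hz
    refine ⟨?_, sys_jac J hJ s z h1 h2 h4⟩
    intro e
    rcases e with _ | j
    · simp only [sysPoly, map_sub, map_sum, map_mul, map_prod, MvPolynomial.eval_X, MvPolynomial.eval_C]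
      rw [← h2, Finset.sum_mul, sub_eq_zero]
      apply Finset.sum_congr rfl
      intro i _
      rw [← Finset.mul_prod_erase univ z (mem_univ i), inv_mul_cancel_left₀ (h1 i)]
    · simp only [sysPoly, map_sub, map_sum, map_pow, MvPolynomial.eval_X, MvPolynomial.eval_C, h3 j, sub_self]) (1 + ∑ j ∈ J, j) (sys_degree J s)
  simpa using h

/-- tuples with spanning tangent vectors -/
def goodT {F : Type*} [Field F] (J : Finset ℕ) {r : ℕ} (x : Fin r → Fˣ) : Prop :=
  ∃ s : Option J → Fin r, LinearIndependent F (fun i => phiv J ((x (s i) : F)))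

open Classical in
lemma good_fiber_s {F : Type*} [Field F] [Fintype F] (J : Finset ℕ) (hJ : ∀ j ∈ J, (j : F) ≠ 0)
    (r : ℕ) (s0 : Option J → F) (s : Option J → Fin r) :
    (univ.filter (fun x : Fin r → Fˣ => LinearIndependent F (fun i => phiv J ((x (s i) : F))) ∧
      ∑ i, ((x i : F))⁻¹ = s0 none ∧ ∀ j : J, ∑ i, (x i : F) ^ j.1 = s0 (some j))).card ≤
      (1 + ∑ j ∈ J, j) ^ (J.card + 1) * (Fintype.card Fˣ) ^ (r - (J.card + 1)) := by
  by_cases hs : Function.Injective s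
  swap
  · rw [Finset.filter_eq_empty_iff.mpr]
    · simp
    · intro x _ hx
      apply hs
      intro a b hab
      apply hx.1.injective
      simp only [hab]
  have hcardc : Fintype.card ({i : Fin r // i ∉ Set.range s} → Fˣ) = (Fintype.card Fˣ) ^ (r - (J.card + 1)) := by
    rw [Fintype.card_fun, Fintype.card_subtype_compl, Fintype.card_fin]
    congr 2
    have : Fintype.card {x // x ∈ Set.range s} = Fintype.card (Option J) := (Fintype.card_congr (Equiv.ofInjective s hs)).symm
    rw [this]; simp
  rw [← hcardc, ← Finset.card_univ]
  apply Finset.card_le_mul_card_image_of_maps_to (f := fun x i => x i.1) (fun _ _ => mem_univ _)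
  intro y _
  have hsplit : ∀ (x : Fin r → Fˣ) (g : Fˣ → F), (fun i : {i : Fin r // i ∉ Set.range s} => x i.1) = y →
      ∑ i, g (x i) = ∑ i, g (x (s i)) + ∑ i : {i : Fin r // i ∉ Set.range s}, g (y i) := by
    intro x g hy
    rw [← Fintype.sum_subtype_add_sum_subtype (fun i => i ∈ Set.range s) (fun i => g (x i))]
    congr 1
    · symm
      convert Fintype.sum_equiv (Equiv.ofInjective s hs) (fun i => g (x (s i))) (fun i : {i : Fin r // i ∈ Set.range s} => g (x i.1)) (fun i => rfl)
    · rw [← hy]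
  set W := (univ.filter (fun x : Fin r → Fˣ => LinearIndependent F (fun i => phiv J ((x (s i) : F))) ∧
      ∑ i, ((x i : F))⁻¹ = s0 none ∧ ∀ j : J, ∑ i, (x i : F) ^ j.1 = s0 (some j))).filter
      (fun x => (fun i : {i : Fin r // i ∉ Set.range s} => x i.1) = y) with hW
  let g : (Fin r → Fˣ) → (Option J → F) := fun x i => (x (s i) : F)
  have hinj : Set.InjOn g W := by
    intro x hx x' hx' hxx
    rw [Finset.mem_coe, hW, mem_filter] at hx hx'
    funext i
    by_cases hi : i ∈ Set.range s
    · obtain ⟨k, rfl⟩ := hi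
      exact Units.ext (congrFun hxx k)
    · have h1 := congrFun hx.2 ⟨i, hi⟩
      have h2 := congrFun hx'.2 ⟨i, hi⟩
      simp only at h1 h2
      rw [h1, h2]
  rw [← Finset.card_image_of_injOn hinj]
  apply sys_count J hJ (fun e => match e with
    | none => s0 none - ∑ i : {i : Fin r // i ∉ Set.range s}, ((y i : F))⁻¹
    | some j => s0 (some j) - ∑ i : {i : Fin r // i ∉ Set.range s}, ((y i : F)) ^ j.1)
  intro z hz
  rw [mem_image] at hz
  obtain ⟨x, hx, rfl⟩ := hz
  rw [hW, mem_filter, mem_filter] at hx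
  obtain ⟨⟨_, h1, h2, h3⟩, h4⟩ := hx
  refine ⟨fun i => (x (s i)).ne_zero, ?_, ?_, h1⟩
  · have := hsplit x (fun u => (u : F)⁻¹) h4
    simp only [g]
    rw [← h2, this]; ring
  · intro j
    have := hsplit x (fun u => (u : F) ^ j.1) h4
    simp only [g]
    rw [← h3 j, this]; ring

open Classical in
lemma good_fiber {F : Type*} [Field F] [Fintype F] (J : Finset ℕ) (hJ : ∀ j ∈ J, (j : F) ≠ 0)
    (r : ℕ) (s0 : Option J → F) :
    (univ.filter (fun x : Fin r → Fˣ => goodT J x ∧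
      ∑ i, ((x i : F))⁻¹ = s0 none ∧ ∀ j : J, ∑ i, (x i : F) ^ j.1 = s0 (some j))).card ≤
      r ^ (J.card + 1) * ((1 + ∑ j ∈ J, j) ^ (J.card + 1) * (Fintype.card Fˣ) ^ (r - (J.card + 1))) := by
  have hsub : (univ.filter (fun x : Fin r → Fˣ => goodT J x ∧
      ∑ i, ((x i : F))⁻¹ = s0 none ∧ ∀ j : J, ∑ i, (x i : F) ^ j.1 = s0 (some j))) ⊆
      (univ : Finset (Option J → Fin r)).biUnion (fun s => univ.filter (fun x : Fin r → Fˣ => LinearIndependent F (fun i => phiv J ((x (s i) : F))) ∧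
      ∑ i, ((x i : F))⁻¹ = s0 none ∧ ∀ j : J, ∑ i, (x i : F) ^ j.1 = s0 (some j))) := by
    intro x hx
    rw [mem_filter] at hx
    obtain ⟨_, ⟨s, hs⟩, h2⟩ := hx
    rw [mem_biUnion]
    exact ⟨s, mem_univ _, by rw [mem_filter]; exact ⟨mem_univ _, hs, h2⟩⟩
  refine (Finset.card_le_card hsub).trans ?_
  refine (Finset.card_biUnion_le_card_mul _ _ _ (fun s _ => good_fiber_s J hJ r s0 s)).trans ?_
  simp

lemma exists_basis_sub {F : Type*} [Field F] (J : Finset ℕ) {r : ℕ} (v : Fin r → (Option J → F))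
    (h : Submodule.span F (Set.range v) = ⊤) : ∃ s : Option J → Fin r, LinearIndependent F (fun i => v (s i)) := by
  obtain ⟨κ, a, _, hspan, hli⟩ := exists_linearIndependent' F v
  rw [h] at hspan
  let b := Module.Basis.mk hli hspan.ge
  let e := (Pi.basisFun F (Option J)).indexEquiv b
  exact ⟨fun i => a (e i), hli.comp e e.injective⟩

open Classical in
lemma bad_count {F : Type*} [Field F] [Fintype F] (J : Finset ℕ) (r w : ℕ)
    (hJ : ∀ j ∈ J, j + 1 ≤ w) :
    (univ.filter (fun x : Fin r → Fˣ => ¬ goodT J x)).card ≤ (Fintype.card F) ^ (J.card + 1) * w ^ r := by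
  let Rt : (Option J → F) → Finset Fˣ := fun l => univ.filter (fun u : Fˣ => ∑ e, l e * phiv J (u : F) e = 0)
  have hRt : ∀ l, l ≠ 0 → (Rt l).card ≤ w := by
    intro l hl
    let q : Polynomial F := Polynomial.C (l none) + ∑ j : J, Polynomial.C (l (some j)) * Polynomial.X ^ (j.1 + 1)
    have hco : ∀ j : J, q.coeff (j.1 + 1) = l (some j) := by
      intro j
      simp only [q, Polynomial.coeff_add, Polynomial.finsetSum_coeff, Polynomial.coeff_C_mul, Polynomial.coeff_X_pow,
        Polynomial.coeff_C]
      rw [Finset.sum_eq_single j]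
      · simp
      · intro j' _ hj'
        rw [if_neg, mul_zero]
        intro h; apply hj'; apply Subtype.ext; omega
      · simp
    have hco0 : q.coeff 0 = l none := by
      simp only [q, Polynomial.coeff_add, Polynomial.finsetSum_coeff, Polynomial.coeff_C_mul, Polynomial.coeff_X_pow,
        Polynomial.coeff_C]
      simp
    have hq : q ≠ 0 := by
      intro h0
      apply hl
      funext e
      rcases e with _ | j
      · rw [← hco0, h0]; simp
      · rw [← hco j, h0]; simp
    have hdeg : q.natDegree ≤ w := by
      refine (Polynomial.natDegree_add_le _ _).trans (max_le (by simp) ?_)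
      apply Polynomial.natDegree_sum_le_of_forall_le
      intro j _
      exact (Polynomial.natDegree_C_mul_X_pow_le _ _).trans (hJ j.1 j.2)
    calc (Rt l).card ≤ q.roots.toFinset.card := by
          apply Finset.card_le_card_of_injOn (fun u : Fˣ => (u : F))
          · intro u hu
            rw [Finset.mem_coe, mem_filter] at hu
            rw [Finset.mem_coe, Multiset.mem_toFinset, Polynomial.mem_roots hq, Polynomial.IsRoot.def]
            rw [← hu.2, Fintype.sum_option]
            simp [q, phiv, Polynomial.eval_finsetSum]
          · intro u _ u' _ h
            exact Units.ext h
      _ ≤ Multiset.card q.roots := Multiset.toFinset_card_le _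
      _ ≤ q.natDegree := q.card_roots'
      _ ≤ w := hdeg
  have hsub : (univ.filter (fun x : Fin r → Fˣ => ¬ goodT J x)) ⊆
      ((univ : Finset (Option J → F)).filter (fun l => l ≠ 0)).biUnion (fun l => Fintype.piFinset (fun _ : Fin r => Rt l)) := by
    intro x hx
    rw [mem_filter] at hx
    have hspan : Submodule.span F (Set.range (fun i => phiv J (x i : F))) ≠ ⊤ := by
      intro h
      exact hx.2 (exists_basis_sub J _ h)
    obtain ⟨f, hf0, hf⟩ := Submodule.exists_le_ker_of_lt_top _ (lt_top_iff_ne_top.mpr hspan)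
    rw [mem_biUnion]
    have hfx : ∀ v : Option J → F, f v = ∑ e, f (Pi.single e 1) * v e := by
      intro v
      conv_lhs => rw [← Finset.univ_sum_single v, map_sum]
      apply Finset.sum_congr rfl
      intro e _
      have : Pi.single e (v e) = v e • (Pi.single e (1 : F) : Option J → F) := by
        rw [← Pi.single_smul]; simp
      rw [this, map_smul, smul_eq_mul, mul_comm]
    refine ⟨fun e => f (Pi.single e 1), ?_, ?_⟩
    · rw [mem_filter]
      refine ⟨mem_univ _, ?_⟩
      intro h0
      apply hf0
      apply LinearMap.ext
      intro v
      rw [hfx]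
      simp only [funext_iff, Pi.zero_apply] at h0
      simp [h0]
    · rw [Fintype.mem_piFinset]
      intro i
      rw [mem_filter]
      refine ⟨mem_univ _, ?_⟩
      rw [← hfx]
      exact hf (Submodule.subset_span ⟨i, rfl⟩)
  refine (Finset.card_le_card hsub).trans ?_
  refine (Finset.card_biUnion_le_card_mul _ _ (w ^ r) ?_).trans ?_
  · intro l hl
    rw [mem_filter] at hl
    rw [Fintype.card_piFinset, Finset.prod_const, Finset.card_univ, Fintype.card_fin]
    exact Nat.pow_le_pow_left (hRt l hl.2) r
  · apply Nat.mul_le_mul_right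
    refine (Finset.card_filter_le _ _).trans ?_
    rw [Finset.card_univ]; simp

open Classical in
/-- bilinear estimate -/
lemma bilin_bound {V X : Type*} [Fintype V] [DecidableEq V] (e : V → V → ℂ)
    (he : ∀ a b, ∑ v, e a v * (starRingEnd ℂ) (e b v) = if a = b then (Fintype.card V : ℂ) else 0)
    (s : Finset X) (A : X → V) (M : ℝ) (hM0 : 0 ≤ M)
    (hM : ∀ v, ((s.filter (fun x => A x = v)).card : ℝ) ≤ M) :
    (∑ y ∈ s, ‖∑ x ∈ s, e (A x) (A y)‖) ≤ s.card * M * Real.sqrt (Fintype.card V) := by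
  have h1 : (∑ y ∈ s, ‖∑ x ∈ s, e (A x) (A y)‖) ^ 2 ≤ s.card * ∑ y ∈ s, ‖∑ x ∈ s, e (A x) (A y)‖ ^ 2 := by
    exact sq_sum_le_card_mul_sum_sq
  have h2 : ∑ y ∈ s, ‖∑ x ∈ s, e (A x) (A y)‖ ^ 2 ≤ M * ∑ v, ‖∑ x ∈ s, e (A x) v‖ ^ 2 := by
    rw [← Finset.sum_fiberwise_of_maps_to (s := s) (t := univ) (g := A) (fun _ _ => mem_univ _), Finset.mul_sum]
    apply Finset.sum_le_sum
    intro v _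
    rw [Finset.sum_congr rfl (g := fun _ => ‖∑ x ∈ s, e (A x) v‖ ^ 2)
      (fun y hy => by rw [(mem_filter.mp hy).2])]
    rw [Finset.sum_const, nsmul_eq_mul]
    exact mul_le_mul_of_nonneg_right (hM v) (by positivity)
  have h3 : ∑ v, ‖∑ x ∈ s, e (A x) v‖ ^ 2 ≤ Fintype.card V * (s.card * M) := by
    rw [parseval_gen e he s A]
    apply mul_le_mul_of_nonneg_left _ (by positivity)
    have : (∑ x ∈ s, ((s.filter (fun y => A x = A y)).card : ℝ)) ≤ s.card * M := by
      rw [← nsmul_eq_mul]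
      apply Finset.sum_le_card_nsmul
      intro x _
      have := hM (A x)
      simp_rw [eq_comm (a := A x)]
      exact this
    exact_mod_cast this
  apply le_of_sq_le_sq _ (by positivity)
  rw [mul_pow, Real.sq_sqrt (by positivity)]
  calc _ ≤ _ := h1
    _ ≤ s.card * (M * (Fintype.card V * (s.card * M))) := by gcongr; exact h2.trans (by gcongr)
    _ = _ := by ring

lemma addChar_sum {G ι : Type*} [AddCommMonoid G] (ψ : AddChar G ℂ) (s : Finset ι) (f : ι → G) :
    ψ (∑ i ∈ s, f i) = ∏ i ∈ s, ψ (f i) := by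
  classical
  induction s using Finset.induction_on with
  | empty => simp
  | insert a s ha ih => rw [Finset.sum_insert ha, Finset.prod_insert ha, AddChar.map_add_eq_mul, ih]

/-- the phase -/
def thetaJ (p : ℕ) [Fact p.Prime] (k : ZMod (p ^ 2)) (J : Finset ℕ) (c : ℕ → ZMod p) (u : (ZMod p)ˣ) : ℂ :=
  ZMod.stdAddChar (k * tau p ((u⁻¹ : (ZMod p)ˣ) : ZMod p)) * ∏ j : J, ZMod.stdAddChar (c j * (u : ZMod p) ^ j.1)

lemma norm_thetaJ (p : ℕ) [Fact p.Prime] (k : ZMod (p ^ 2)) (J : Finset ℕ) (c : ℕ → ZMod p) (u : (ZMod p)ˣ) :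
    ‖thetaJ p k J c u‖ = 1 := by
  have : NeZero (p ^ 2) := ⟨pow_ne_zero _ (Fact.out : p.Prime).ne_zero⟩
  unfold thetaJ
  rw [norm_mul, norm_prod, AddChar.norm_apply, one_mul]
  exact Finset.prod_eq_one fun j _ => AddChar.norm_apply _ _

/-- the pairing -/
def eJ (p : ℕ) [Fact p.Prime] (k : ZMod (p ^ 2)) (J : Finset ℕ) (c : ℕ → ZMod p)
    (a b : ZMod (p ^ 2) × (J → ZMod p)) : ℂ :=
  ZMod.stdAddChar (k * a.1 * b.1) * ∏ j : J, ZMod.stdAddChar (c j * a.2 j * b.2 j)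

/-- power sums -/
def AJ (p : ℕ) [Fact p.Prime] (J : Finset ℕ) {r : ℕ} (x : Fin r → (ZMod p)ˣ) : ZMod (p ^ 2) × (J → ZMod p) :=
  (∑ i, tau p (((x i)⁻¹ : (ZMod p)ˣ) : ZMod p), fun j => ∑ i, (x i : ZMod p) ^ j.1)

lemma eJ_orth (p : ℕ) [hp : Fact p.Prime] (k : ZMod (p ^ 2)) (hk : IsUnit k) (J : Finset ℕ) (c : ℕ → ZMod p)
    (hc : ∀ j ∈ J, c j ≠ 0) (a b : ZMod (p ^ 2) × (J → ZMod p)) :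
    ∑ v, eJ p k J c a v * (starRingEnd ℂ) (eJ p k J c b v) =
      if a = b then (Fintype.card (ZMod (p ^ 2) × (J → ZMod p)) : ℂ) else 0 := by
  have hz : NeZero (p ^ 2) := ⟨pow_ne_zero _ (Fact.out : p.Prime).ne_zero⟩
  unfold eJ
  have h1 : ∀ v : ZMod (p ^ 2) × (J → ZMod p),
      (ZMod.stdAddChar (k * a.1 * v.1) * ∏ j : J, ZMod.stdAddChar (c j * a.2 j * v.2 j)) *
      (starRingEnd ℂ) (ZMod.stdAddChar (k * b.1 * v.1) * ∏ j : J, ZMod.stdAddChar (c j * b.2 j * v.2 j)) =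
      (ZMod.stdAddChar (k * a.1 * v.1) * (starRingEnd ℂ) (ZMod.stdAddChar (k * b.1 * v.1))) *
      ∏ j : J, (ZMod.stdAddChar (c j * a.2 j * v.2 j) * (starRingEnd ℂ) (ZMod.stdAddChar (c j * b.2 j * v.2 j)) : ℂ) := by
    intro v
    rw [map_mul (starRingEnd ℂ), map_prod (starRingEnd ℂ), Finset.prod_mul_distrib]; ring
  rw [Finset.sum_congr rfl (fun v _ => h1 v), Fintype.sum_prod_type]
  simp only
  simp_rw [← Finset.mul_sum]
  rw [← Finset.sum_mul, std_orth (p ^ 2) k hk]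
  have h2 : ∑ v : J → ZMod p, ∏ j : J, (ZMod.stdAddChar (c j * a.2 j * v j) * (starRingEnd ℂ) (ZMod.stdAddChar (c j * b.2 j * v j)) : ℂ)
     = ∏ j : J, (if a.2 j = b.2 j then (Fintype.card (ZMod p) : ℂ) else 0) := by
    rw [← Finset.prod_congr rfl (fun (j : J) _ => std_orth p (c j) (isUnit_iff_ne_zero.mpr (hc j j.2)) (a.2 j) (b.2 j)),
      Finset.prod_univ_sum, Fintype.piFinset_univ]
  rw [h2]
  by_cases hab : a = b
  · subst hab
    simp [ZMod.card]
  · rw [if_neg hab]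
    by_cases h : a.1 = b.1
    · have h3 : ∃ j, a.2 j ≠ b.2 j := by
        by_contra! hh
        exact hab (Prod.ext h (funext hh))
      obtain ⟨j, hj⟩ := h3
      rw [Finset.prod_eq_zero (mem_univ j) (if_neg hj), mul_zero]
    · rw [if_neg h, zero_mul]

lemma eJ_AJ (p : ℕ) [hp : Fact p.Prime] (k : ZMod (p ^ 2)) (J : Finset ℕ) (c : ℕ → ZMod p) {r : ℕ}
    (x y : Fin r → (ZMod p)ˣ) :
    eJ p k J c (AJ p J x) (AJ p J y) = ∏ i, ∏ l, thetaJ p k J c (x i * y l) := by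
  have hz : NeZero (p ^ 2) := ⟨pow_ne_zero _ (Fact.out : p.Prime).ne_zero⟩
  unfold eJ AJ thetaJ
  simp only
  simp_rw [Finset.prod_mul_distrib]
  congr 1
  · rw [mul_assoc, Finset.sum_mul_sum, Finset.mul_sum]
    simp_rw [Finset.mul_sum]
    rw [addChar_sum]
    refine Finset.prod_congr rfl fun i _ => ?_
    rw [addChar_sum]
    refine Finset.prod_congr rfl fun l _ => ?_
    rw [mul_inv, Units.val_mul, map_mul (tau p)]
  · have : ∀ i l, ∏ j : J, (ZMod.stdAddChar (c j * ((x i * y l : (ZMod p)ˣ) : ZMod p) ^ j.1) : ℂ) = 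
       ∏ j : J, (ZMod.stdAddChar (c j * ((x i : ZMod p) ^ j.1 * (y l : ZMod p) ^ j.1)) : ℂ) := by
      intro i l
      refine Finset.prod_congr rfl fun j _ => ?_
      rw [Units.val_mul, mul_pow]
    simp_rw [this]
    rw [Finset.prod_congr rfl (fun i _ => Finset.prod_comm), Finset.prod_comm]
    refine Finset.prod_congr rfl fun j _ => ?_
    rw [mul_assoc, Finset.sum_mul_sum, Finset.mul_sum]
    simp_rw [Finset.mul_sum]
    rw [addChar_sum]
    refine Finset.prod_congr rfl fun i _ => ?_
    rw [addChar_sum]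

/-- Hoelder step -/
lemma holder_step {U : Type*} [Group U] [Fintype U] (θ : U → ℂ) (r : ℕ) (hr : 1 ≤ r) :
    (Fintype.card U : ℝ) ^ r * ‖∑ u, θ u‖ ^ (r * r) ≤ (Fintype.card U : ℝ) ^ (r * (r - 1)) *
      ∑ y : Fin r → U, ‖∑ x : Fin r → U, ∏ i, ∏ l, θ (x i * y l)‖ := by
  classical
  set S := ∑ u, θ u with hS
  have h1 : ∀ x : U, S ^ r = ∑ y : Fin r → U, ∏ l, θ (x * y l) := by
    intro x
    have : S = ∑ u, θ (x * u) := (Fintype.sum_equiv (Equiv.mulLeft x) _ _ (fun u => rfl)).symm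
    rw [this, Finset.sum_pow', Fintype.piFinset_univ]
  have h2 : (Fintype.card U : ℂ) * S ^ r = ∑ y : Fin r → U, ∑ x : U, ∏ l, θ (x * y l) := by
    rw [Finset.sum_comm, ← Finset.sum_congr rfl (fun x _ => h1 x)]
    simp
  have h3 : (Fintype.card U : ℝ) * ‖S‖ ^ r ≤ ∑ y : Fin r → U, ‖∑ x : U, ∏ l, θ (x * y l)‖ := by
    have := norm_sum_le univ (fun y : Fin r → U => ∑ x : U, ∏ l, θ (x * y l))
    rw [← h2, norm_mul, norm_pow] at this
    simpa using this
  have h4 : ∀ y : Fin r → U, ‖∑ x : U, ∏ l, θ (x * y l)‖ ^ r = ‖∑ x : Fin r → U, ∏ i, ∏ l, θ (x i * y l)‖ := by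
    intro y
    rw [← norm_pow, Finset.sum_pow', Fintype.piFinset_univ]
  obtain ⟨r', rfl⟩ : ∃ r', r = r' + 1 := ⟨r - 1, by omega⟩
  have h5 := pow_sum_div_card_le_sum_pow (s := (univ : Finset (Fin (r' + 1) → U)))
    (f := fun y => ‖∑ x : U, ∏ l, θ (x * y l)‖) (fun _ _ => norm_nonneg _) r'
  have hU : 0 < (Fintype.card U : ℝ) := by exact_mod_cast Fintype.card_pos
  rw [div_le_iff₀ (by simp; positivity)] at h5
  rw [Finset.sum_congr rfl (fun y _ => h4 y)] at h5
  have h6 := pow_le_pow_left₀ (by positivity) h3 (r' + 1)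
  rw [mul_pow, ← pow_mul] at h6
  refine (h6.trans h5).trans (le_of_eq ?_)
  rw [Finset.card_univ, Fintype.card_fun, Fintype.card_fin, Nat.cast_pow, ← pow_mul, mul_comm]
  simp

lemma twisted_D (n w B : ℕ) (hn : 2 ≤ n) (hnw : n + 1 ≤ w) (hB : B ≤ 1 + (n - 1) * (w - 2)) :
    (2 * n * B) ^ n + 2 * w ^ (2 * n) ≤ (3 * w ^ 3) ^ n := by
  have h1 : 2 * n * B ≤ 2 * w ^ 3 := by
    have : B ≤ w * w := by
      obtain ⟨a, rfl⟩ : ∃ a, n = a + 1 := ⟨n - 1, by omega⟩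
      obtain ⟨b, rfl⟩ : ∃ b, w = b + 2 := ⟨w - 2, by omega⟩
      simp only [Nat.add_sub_cancel] at hB
      have : a * b ≤ b * b := Nat.mul_le_mul_right _ (by omega)
      nlinarith
    calc 2 * n * B ≤ 2 * w * (w * w) := Nat.mul_le_mul (by omega) this
      _ = 2 * w ^ 3 := by ring
  have h2 : 2 ≤ w ^ n := by
    calc 2 ≤ w := by omega
      _ = w ^ 1 := (pow_one w).symm
      _ ≤ w ^ n := Nat.pow_le_pow_right (by omega) (by omega)
  have h3 : 2 ^ n + 1 ≤ 3 ^ n := by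
    have := Nat.pow_lt_pow_left (show 2 < 3 by norm_num) (show n ≠ 0 by omega)
    omega
  calc (2 * n * B) ^ n + 2 * w ^ (2 * n) ≤ (2 * w ^ 3) ^ n + w ^ n * w ^ (2 * n) :=
        Nat.add_le_add (Nat.pow_le_pow_left h1 n) (Nat.mul_le_mul_right _ h2)
    _ = (2 ^ n + 1) * (w ^ 3) ^ n := by rw [mul_pow]; ring
    _ ≤ 3 ^ n * (w ^ 3) ^ n := Nat.mul_le_mul_right _ h3
    _ = _ := by rw [mul_pow]

set_option maxHeartbeats 1000000 in
lemma twisted_bound (p : ℕ) [hp : Fact p.Prime] (k : ZMod (p ^ 2)) (hk : IsUnit k) (J : Finset ℕ)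
    (hJ0 : J.Nonempty) (c : ℕ → ZMod p) (hc : ∀ j ∈ J, c j ≠ 0) (w : ℕ) (hJ : ∀ j ∈ J, 1 ≤ j ∧ j + 2 ≤ w)
    (hw : w ≤ p) (n : ℕ) (hn : n = J.card + 1) :
    ‖∑ u, thetaJ p k J c u‖ ^ (4 * n ^ 2) * (Real.sqrt p) ^ (n - 1) ≤ (p : ℝ) ^ (4 * n ^ 2) * (3 * (w : ℝ) ^ 3) ^ n := by
  classical
  have hz : NeZero (p ^ 2) := ⟨pow_ne_zero _ (Fact.out : p.Prime).ne_zero⟩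
  have hn2 : 2 ≤ n := by have := hJ0.card_pos; omega
  have hJsub : J ⊆ Finset.Icc 1 (w - 2) := by
    intro j hj; have := hJ j hj; rw [Finset.mem_Icc]; omega
  have hJc : J.card ≤ w - 2 := by simpa using Finset.card_le_card hJsub
  have hnw : n + 1 ≤ w := by have := hJ0.card_pos; omega
  set B := 1 + ∑ j ∈ J, j with hBdef
  have hB : B ≤ 1 + (n - 1) * (w - 2) := by
    have : ∑ j ∈ J, j ≤ J.card • (w - 2) := Finset.sum_le_card_nsmul _ _ _ (fun j hj => by have := hJ j hj; omega)
    rw [smul_eq_mul] at this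
    have h' : n - 1 = J.card := by omega
    rw [h']; omega
  have hD := twisted_D n w B hn2 hnw hB
  obtain ⟨r, hr⟩ : ∃ r, r = 2 * n := ⟨_, rfl⟩
  have hp0 : 0 < (p : ℝ) := by exact_mod_cast hp.out.pos
  have hp1 : 1 ≤ (p : ℝ) := by exact_mod_cast hp.out.one_le
  have hU : Fintype.card (ZMod p)ˣ ≤ p := by
    rw [ZMod.card_units p]; omega
  have hU0 : 0 < Fintype.card (ZMod p)ˣ := Fintype.card_pos
  have hUr : (Fintype.card (ZMod p)ˣ : ℝ) ≤ p := by exact_mod_cast hU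
  have hUr0 : 0 < (Fintype.card (ZMod p)ˣ : ℝ) := by exact_mod_cast hU0
  set q := Real.sqrt p with hq
  have hq2 : q ^ 2 = p := Real.sq_sqrt hp0.le
  have hq0 : 0 < q := Real.sqrt_pos.mpr hp0
  have hq1 : 1 ≤ q := by rw [hq]; exact Real.one_le_sqrt.mpr hp1
  -- main split
  set G := univ.filter (fun x : Fin r → (ZMod p)ˣ => goodT J x) with hG
  set Bd := univ.filter (fun x : Fin r → (ZMod p)ˣ => ¬ goodT J x) with hBd
  have hJF : ∀ j ∈ J, (j : ZMod p) ≠ 0 := by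
    intro j hj h0
    rw [ZMod.natCast_eq_zero_iff] at h0
    have := Nat.le_of_dvd (by have := hJ j hj; omega) h0
    have := hJ j hj; omega
  have hbad : (Bd.card : ℝ) ≤ (p : ℝ) ^ n * (w : ℝ) ^ r := by
    have := bad_count (F := ZMod p) J r w (fun j hj => by have := hJ j hj; omega)
    rw [ZMod.card, ← hn] at this
    have hb : Bd.card ≤ p ^ n * w ^ r := by
      rw [hBd]
      convert this
    calc (Bd.card : ℝ) ≤ ((p ^ n * w ^ r : ℕ) : ℝ) := Nat.cast_le.mpr hb
      _ = _ := by push_cast; rfl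
  set M : ℝ := (r : ℝ) ^ n * ((B : ℝ) ^ n * (p : ℝ) ^ n) with hM
  have hfib : ∀ v, ((G.filter (fun x => AJ p J x = v)).card : ℝ) ≤ M := by
    intro v
    have h1 := good_fiber (F := ZMod p) J hJF r (fun e => match e with | none => redp p v.1 | some j => v.2 j)
    rw [← hn] at h1
    have h2 : G.filter (fun x => AJ p J x = v) ⊆ (univ.filter (fun x : Fin r → (ZMod p)ˣ => goodT J x ∧
      ∑ i, ((x i : ZMod p))⁻¹ = redp p v.1 ∧ ∀ j : J, ∑ i, (x i : ZMod p) ^ j.1 = v.2 j)) := by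
      intro x hx
      rw [mem_filter, hG, mem_filter] at hx
      rw [mem_filter]
      obtain ⟨⟨_, h3⟩, rfl⟩ := hx
      refine ⟨mem_univ _, h3, ?_, fun j => rfl⟩
      unfold AJ
      rw [map_sum]
      refine Finset.sum_congr rfl fun i _ => ?_
      rw [redp_tau, Units.val_inv_eq_inv_val]
    have h3 : (G.filter (fun x => AJ p J x = v)).card ≤ r ^ n * (B ^ n * Fintype.card (ZMod p)ˣ ^ (r - n)) := by
      refine (Finset.card_le_card h2).trans ?_
      convert h1
      rfl
    have h4 : r ^ n * (B ^ n * Fintype.card (ZMod p)ˣ ^ (r - n)) ≤ r ^ n * (B ^ n * p ^ n) := by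
      have : r - n = n := by omega
      rw [this]
      gcongr
    calc ((G.filter (fun x => AJ p J x = v)).card : ℝ) ≤ ((r ^ n * (B ^ n * p ^ n) : ℕ) : ℝ) :=
          Nat.cast_le.mpr (h3.trans h4)
      _ = M := by rw [hM]; simp only [Nat.cast_mul, Nat.cast_pow]
  have hGc : (G.card : ℝ) ≤ (p : ℝ) ^ r := by
    have : G.card ≤ Fintype.card (ZMod p)ˣ ^ r := by
      refine (Finset.card_filter_le _ _).trans ?_
      simp
    calc (G.card : ℝ) ≤ (Fintype.card (ZMod p)ˣ : ℝ) ^ r := by exact_mod_cast this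
      _ ≤ _ := by gcongr
  have hbil := bilin_bound (eJ p k J c) (eJ_orth p k hk J c hc) G (AJ p J (r := r)) M (by positivity) hfib
  have hV : Real.sqrt (Fintype.card (ZMod (p ^ 2) × (J → ZMod p))) = q ^ (n + 1) := by
    have : ((Fintype.card (ZMod (p ^ 2) × (J → ZMod p)) : ℕ) : ℝ) = (q ^ (n + 1)) ^ 2 := by
      rw [← pow_mul, mul_comm, pow_mul, hq2, Fintype.card_prod, Fintype.card_fun, ZMod.card, ZMod.card, hn]
      simp
      ring
    rw [this, Real.sqrt_sq (by positivity)]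
  rw [hV] at hbil
  set Tot := ∑ y : Fin r → (ZMod p)ˣ, ‖∑ x : Fin r → (ZMod p)ˣ, ∏ i, ∏ l, thetaJ p k J c (x i * y l)‖ with hTot
  have hnorm1 : ∀ a b, ‖eJ p k J c a b‖ = 1 := by
    intro a b
    unfold eJ
    rw [norm_mul, norm_prod, AddChar.norm_apply, one_mul]
    exact Finset.prod_eq_one fun j _ => AddChar.norm_apply _ _
  have hsplit1 : ∀ y : Fin r → (ZMod p)ˣ, ‖∑ x : Fin r → (ZMod p)ˣ, ∏ i, ∏ l, thetaJ p k J c (x i * y l)‖ ≤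
      ‖∑ x ∈ G, eJ p k J c (AJ p J x) (AJ p J y)‖ + Bd.card := by
    intro y
    simp_rw [← eJ_AJ]
    rw [← Finset.sum_filter_add_sum_filter_not univ (fun x => goodT J x)]
    refine (norm_add_le _ _).trans ?_
    gcongr
    refine (norm_sum_le _ _).trans ?_
    simp [hnorm1, hBd]
  have hcardU : ((univ : Finset (Fin r → (ZMod p)ˣ)).card : ℝ) ≤ (p : ℝ) ^ r := by
    simp only [Finset.card_univ, Fintype.card_fun, Fintype.card_fin, Nat.cast_pow]
    gcongr
  have hT : Tot ≤ G.card * M * q ^ (n + 1) + 2 * (Bd.card * (p : ℝ) ^ r) := by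
    calc Tot ≤ ∑ y : Fin r → (ZMod p)ˣ, (‖∑ x ∈ G, eJ p k J c (AJ p J x) (AJ p J y)‖ + Bd.card) :=
          Finset.sum_le_sum fun y _ => hsplit1 y
      _ = (∑ y ∈ G, ‖∑ x ∈ G, eJ p k J c (AJ p J x) (AJ p J y)‖) + (∑ y ∈ Bd, ‖∑ x ∈ G, eJ p k J c (AJ p J x) (AJ p J y)‖)
            + (univ : Finset (Fin r → (ZMod p)ˣ)).card * Bd.card := by
          rw [Finset.sum_add_distrib, Finset.sum_const, nsmul_eq_mul, hG, hBd, Finset.sum_filter_add_sum_filter_not]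
      _ ≤ G.card * M * q ^ (n + 1) + Bd.card * (p : ℝ) ^ r + (p : ℝ) ^ r * Bd.card := by
          gcongr
          rw [← nsmul_eq_mul]
          apply Finset.sum_le_card_nsmul
          intro y _
          refine (norm_sum_le _ _).trans ?_
          simp only [hnorm1]
          simpa using hGc
      _ = _ := by ring
  have hT2 : Tot * q ^ (n - 1) ≤ (p : ℝ) ^ (2 * r) * (3 * (w : ℝ) ^ 3) ^ n := by
    have hDr : (2 * n * B : ℝ) ^ n + 2 * (w : ℝ) ^ (2 * n) ≤ (3 * (w : ℝ) ^ 3) ^ n := by exact_mod_cast hD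
    obtain ⟨a, ha⟩ : ∃ a, n = a + 1 := ⟨n - 1, by omega⟩
    have e1 : q ^ (n + 1) * q ^ (n - 1) = (p : ℝ) ^ n := by
      rw [← pow_add, ← hq2, ← pow_mul]; congr 1; omega
    have e2 : q ^ (n - 1) ≤ (p : ℝ) ^ n := by
      rw [← hq2, ← pow_mul]; exact pow_le_pow_right₀ hq1 (by omega)
    have e3 : (r : ℝ) = 2 * n := by rw [hr]; push_cast; ring
    calc Tot * q ^ (n - 1) ≤ (G.card * M * q ^ (n + 1) + 2 * (Bd.card * (p : ℝ) ^ r)) * q ^ (n - 1) := by gcongr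
      _ = G.card * M * (q ^ (n + 1) * q ^ (n - 1)) + 2 * (Bd.card * (p : ℝ) ^ r) * q ^ (n - 1) := by ring
      _ ≤ (p : ℝ) ^ r * M * (p : ℝ) ^ n + 2 * (((p : ℝ) ^ n * (w : ℝ) ^ r) * (p : ℝ) ^ r) * (p : ℝ) ^ n := by
          rw [e1]; gcongr
      _ = (p : ℝ) ^ (2 * r) * ((2 * n * B : ℝ) ^ n + 2 * (w : ℝ) ^ (2 * n)) := by
          rw [hM, e3, hr]; simp only [mul_pow]; ring
      _ ≤ _ := by gcongr
  have hH := holder_step (thetaJ p k J c) r (by omega)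
  rw [← hTot] at hH
  set S := ‖∑ u, thetaJ p k J c u‖ with hS
  set u := (Fintype.card (ZMod p)ˣ : ℝ) with hu
  have hH2 : S ^ (r * r) ≤ u ^ (r * r - 2 * r) * Tot := by
    have e4 : r * (r - 1) = r + (r * r - 2 * r) := by
      obtain ⟨a, ha⟩ : ∃ a, r = a + 2 := ⟨r - 2, by omega⟩
      rw [ha]
      have : (a + 2) * (a + 2) - 2 * (a + 2) = a * (a + 2) := by
        rw [← Nat.sub_mul]; simp
      rw [this]; simp; ring
    rw [e4, pow_add, mul_assoc (u ^ r)] at hH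
    exact le_of_mul_le_mul_left hH (by positivity)
  have e5 : 4 * n ^ 2 = r * r := by rw [hr]; ring
  have hTot0 : 0 ≤ Tot := Finset.sum_nonneg fun _ _ => norm_nonneg _
  rw [e5]
  calc S ^ (r * r) * q ^ (n - 1) ≤ (u ^ (r * r - 2 * r) * Tot) * q ^ (n - 1) := by gcongr
    _ ≤ ((p : ℝ) ^ (r * r - 2 * r) * Tot) * q ^ (n - 1) := by gcongr
    _ = (p : ℝ) ^ (r * r - 2 * r) * (Tot * q ^ (n - 1)) := by ring
    _ ≤ (p : ℝ) ^ (r * r - 2 * r) * ((p : ℝ) ^ (2 * r) * (3 * (w : ℝ) ^ 3) ^ n) := by gcongr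
    _ = _ := by
      rw [← mul_assoc, ← pow_add]
      congr 2
      have : 2 * r ≤ r * r := Nat.mul_le_mul_right _ (by omega)
      omega

lemma num_ind (n : ℕ) (hn : 2 ≤ n) : 6 * ((n : ℝ) + 1) ^ 3 ≤ (9 / 4 : ℝ) ^ (4 * n) := by
  induction n, hn using Nat.le_induction with
  | base => norm_num
  | succ n hn ih =>
    have h1 : ((n : ℝ) + 1 + 1) ^ 3 ≤ 8 * ((n : ℝ) + 1) ^ 3 := by
      have : (n : ℝ) + 1 + 1 ≤ 2 * ((n : ℝ) + 1) := by
        have : (0 : ℝ) ≤ n := by positivity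
        linarith
      calc _ ≤ (2 * ((n : ℝ) + 1)) ^ 3 := by gcongr
        _ = _ := by ring
    have h2 : (9 / 4 : ℝ) ^ (4 * (n + 1)) = (9 / 4 : ℝ) ^ (4 * n) * (9 / 4) ^ 4 := by ring
    have h3 : (8 : ℝ) ≤ (9 / 4) ^ 4 := by norm_num
    have h4 : (0 : ℝ) ≤ (9 / 4 : ℝ) ^ (4 * n) := by positivity
    push_cast
    rw [h2]
    nlinarith

lemma twisted_num (p w n : ℕ) (hp : 1 ≤ p) (S : ℝ) (hS : 0 ≤ S)
    (hn : 2 ≤ n) (hnw : n + 1 ≤ w)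
    (h : S ^ (4 * n ^ 2) * (Real.sqrt p) ^ (n - 1) ≤ (p : ℝ) ^ (4 * n ^ 2) * (3 * (w : ℝ) ^ 3) ^ n) :
    Real.log (2 * p) * S ≤ 9 * p * w := by
  have hp1 : (1 : ℝ) ≤ p := by exact_mod_cast hp
  set T := Real.log (2 * p) with hT
  have hT0 : 0 ≤ T := Real.log_nonneg (by linarith)
  have hexpT : Real.exp T = 2 * p := Real.exp_log (by linarith)
  set q := Real.sqrt p with hq
  have hq0 : 0 < q := Real.sqrt_pos.mpr (by linarith)
  have hq2 : q ^ 2 = p := Real.sq_sqrt (by linarith)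
  obtain ⟨N, hN⟩ : ∃ N, N = 4 * n ^ 2 := ⟨_, rfl⟩
  have hnr : (2 : ℝ) ≤ n := by exact_mod_cast hn
  have hwr : (n : ℝ) + 1 ≤ w := by exact_mod_cast hnw
  have hNr : (N : ℝ) = 4 * n ^ 2 := by rw [hN]; push_cast; ring
  have hN0 : 0 < (N : ℝ) := by rw [hNr]; positivity
  set Y : ℝ := 9 * w * (Real.exp 1 * (n - 1) / (8 * n ^ 2)) with hY
  have he : (2.7 : ℝ) ≤ Real.exp 1 := by have := Real.exp_one_gt_d9; linarith
  have hYlow : 9 / 4 * (w / ((n : ℝ) + 1)) ≤ Y := by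
    rw [hY]
    have h1 : 1 / ((n : ℝ) + 1) * (1 / 4) ≤ Real.exp 1 * (n - 1) / (8 * n ^ 2) := by
      rw [div_mul_div_comm, div_le_div_iff₀ (by positivity) (by positivity)]
      nlinarith [mul_nonneg (show (0 : ℝ) ≤ n - 2 by linarith) (show (0 : ℝ) ≤ n + 2 by linarith), mul_nonneg (sub_nonneg.mpr he) (show (0 : ℝ) ≤ (n - 1) * (n + 1) by nlinarith)]
    calc 9 / 4 * (w / ((n : ℝ) + 1)) = 9 * w * (1 / ((n : ℝ) + 1) * (1 / 4)) := by ring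
      _ ≤ _ := by gcongr
  have hYpow : 6 * (w : ℝ) ^ 3 ≤ Y ^ (4 * n) := by
    have h1 : (1 : ℝ) ≤ w / ((n : ℝ) + 1) := by rw [le_div_iff₀ (by positivity)]; linarith
    calc 6 * (w : ℝ) ^ 3 = 6 * ((n : ℝ) + 1) ^ 3 * (w / ((n : ℝ) + 1)) ^ 3 := by
          rw [mul_assoc, ← mul_pow]; congr 2; field_simp
      _ ≤ (9 / 4 : ℝ) ^ (4 * n) * (w / ((n : ℝ) + 1)) ^ (4 * n) := by
          apply mul_le_mul (num_ind n hn) (pow_le_pow_right₀ h1 (by omega)) (by positivity) (by positivity)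
      _ = (9 / 4 * (w / ((n : ℝ) + 1))) ^ (4 * n) := by rw [mul_pow]
      _ ≤ _ := by gcongr
  have hkey : (T * (Real.exp 1 * (n - 1) / (8 * n ^ 2))) ^ N ≤ 2 ^ n * q ^ (n - 1) := by
    have h1 : T * (Real.exp 1 * (n - 1) / (8 * n ^ 2)) ≤ Real.exp ((n - 1) * T / 2 / N) := by
      refine le_trans (le_of_eq ?_) (exp_one_mul_le_exp _)
      rw [hNr]; field_simp; ring
    have h0 : 0 ≤ T * (Real.exp 1 * (n - 1) / (8 * n ^ 2)) := by
      have : (0 : ℝ) ≤ n - 1 := by linarith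
      positivity
    refine (pow_le_pow_left₀ h0 h1 N).trans ?_
    rw [← Real.exp_nat_mul]
    have h2 : (N : ℝ) * ((n - 1) * T / 2 / N) = ((n - 1 : ℕ) : ℝ) * (T / 2) := by
      rw [Nat.cast_sub (by omega)]; field_simp; push_cast; ring
    rw [h2, Real.exp_nat_mul]
    have h3 : Real.exp (T / 2) ≤ 2 * q := by
      apply le_of_sq_le_sq _ (by positivity)
      rw [← Real.exp_nat_mul, mul_pow, hq2]
      have : ((2 : ℕ) : ℝ) * (T / 2) = T := by push_cast; ring
      rw [this, hexpT]; linarith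
    calc Real.exp (T / 2) ^ (n - 1) ≤ (2 * q) ^ (n - 1) := by gcongr
      _ = 2 ^ (n - 1) * q ^ (n - 1) := mul_pow _ _ _
      _ ≤ _ := by gcongr <;> [norm_num; omega]
  have hclaim : T ^ N * (3 * (w : ℝ) ^ 3) ^ n ≤ (9 * w) ^ N * q ^ (n - 1) := by
    have h1 : T ^ N * (6 * (w : ℝ) ^ 3) ^ n ≤ (9 * w) ^ N * (2 ^ n * q ^ (n - 1)) := by
      calc T ^ N * (6 * (w : ℝ) ^ 3) ^ n ≤ T ^ N * (Y ^ (4 * n)) ^ n := by gcongr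
        _ = (9 * w) ^ N * (T * (Real.exp 1 * (n - 1) / (8 * n ^ 2))) ^ N := by
          rw [← pow_mul, show 4 * n * n = N by rw [hN]; ring, hY, ← mul_pow, ← mul_pow]; congr 1; ring
        _ ≤ _ := by gcongr
    have h2 : (6 * (w : ℝ) ^ 3) ^ n = 2 ^ n * (3 * (w : ℝ) ^ 3) ^ n := by rw [← mul_pow]; congr 1; ring
    rw [h2] at h1
    have h3 : (0 : ℝ) < 2 ^ n := by positivity
    apply le_of_mul_le_mul_left _ h3
    linarith
  rw [← hN] at h
  have hN' : N ≠ 0 := by rintro rfl; simp at hN0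
  apply le_of_pow_le_pow_left₀ hN' (by positivity)
  apply le_of_mul_le_mul_right _ (show 0 < q ^ (n - 1) by positivity)
  calc (T * S) ^ N * q ^ (n - 1) = T ^ N * (S ^ N * q ^ (n - 1)) := by rw [mul_pow]; ring
    _ ≤ T ^ N * ((p : ℝ) ^ N * (3 * (w : ℝ) ^ 3) ^ n) := by gcongr
    _ = (p : ℝ) ^ N * (T ^ N * (3 * (w : ℝ) ^ 3) ^ n) := by ring
    _ ≤ (p : ℝ) ^ N * ((9 * w) ^ N * q ^ (n - 1)) := by gcongr
    _ = _ := by rw [← mul_assoc, ← mul_pow]; congr 2; ring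

/-- Final bound for the twisted Heilbronn sum, over units. -/
lemma twisted_final (p : ℕ) [hp : Fact p.Prime] (hT : 10 ≤ Real.log (2 * p)) (k : ZMod (p ^ 2)) (hk : IsUnit k) (J : Finset ℕ)
    (c : ℕ → ZMod p) (hc : ∀ j ∈ J, c j ≠ 0) (w : ℕ) (hJ : ∀ j ∈ J, 1 ≤ j ∧ j + 2 ≤ w) (hw1 : 1 ≤ w)
    (hw : w ≤ p) :
    Real.log (2 * p) * ‖∑ u, thetaJ p k J c u‖ ≤ 9 * p * w := by
  rcases J.eq_empty_or_nonempty with rfl | hJ0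
  · have h1 := heil_final p hT k hk
    have h2 : ∑ u, thetaJ p k ∅ c u = ∑ u : (ZMod p)ˣ, (ZMod.stdAddChar (k * tau p u) : ℂ) := by
      refine Fintype.sum_equiv (Equiv.inv _) _ _ fun u => ?_
      unfold thetaJ
      rw [Finset.univ_eq_empty, Finset.prod_empty, mul_one]
      rfl
    rw [h2]
    have : (1 : ℝ) ≤ w := by exact_mod_cast hw1
    have : (0 : ℝ) ≤ p := by positivity
    nlinarith
  · have hJsub : J ⊆ Finset.Icc 1 (w - 2) := by
      intro j hj; have := hJ j hj; rw [Finset.mem_Icc]; omega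
    have hJc : J.card ≤ w - 2 := by simpa using Finset.card_le_card hJsub
    have := hJ0.card_pos
    exact twisted_num p w (J.card + 1) hp.out.one_le _ (norm_nonneg _) (by omega) (by omega)
      (twisted_bound p k hk J hJ0 c hc w hJ hw _ rfl)

lemma sum_range_zmod (p : ℕ) [NeZero p] (f : ZMod p → ℂ) : ∑ b ∈ range p, f (b : ZMod p) = ∑ x : ZMod p, f x := by
  refine Finset.sum_nbij' (fun b => (b : ZMod p)) (fun x => x.val) ?_ ?_ ?_ ?_ ?_
  · intro b _; exact mem_univ _
  · intro x _; exact mem_range.mpr (ZMod.val_lt x)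
  · intro b hb; exact ZMod.val_cast_of_lt (mem_range.mp hb)
  · intro x _; exact ZMod.natCast_zmod_val x
  · intro b _; rfl

lemma std_iotap (p : ℕ) [hp : Fact p.Prime] [NeZero (p ^ 2)] (x : ZMod p) :
    (ZMod.stdAddChar (iotap p x) : ℂ) = ZMod.stdAddChar x := by
  obtain ⟨y, rfl⟩ := ZMod.intCast_surjective x
  rw [iotap_int]
  have : (p * y : ZMod (p ^ 2)) = ((p * y : ℤ) : ZMod (p ^ 2)) := by push_cast; rfl
  rw [this, ZMod.stdAddChar_coe, ZMod.stdAddChar_coe]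
  congr 1
  have hp0 : (p : ℂ) ≠ 0 := by exact_mod_cast hp.out.ne_zero
  push_cast
  field_simp

/-- the phase polynomial -/
def kpoly {d : ℕ} (k : Fin d → ℤ) : Polynomial ℤ := ∑ j : Fin d, Polynomial.C (k j) * Polynomial.X ^ (j.val + 1)

/-- complete exponential sum -/
def qsum (p : ℕ) [NeZero (p ^ 2)] {d : ℕ} (k : Fin d → ℤ) : ℂ :=
  ∑ h ∈ range (p ^ 2), (ZMod.stdAddChar (((kpoly k).eval (h : ℤ) : ℤ) : ZMod (p ^ 2)) : ℂ)

lemma qsum_eq (p : ℕ) [hp : Fact p.Prime] [NeZero (p ^ 2)] {d : ℕ} (k : Fin d → ℤ) :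
    qsum p k = ∑ a ∈ range p, (ZMod.stdAddChar (((kpoly k).eval (a : ℤ) : ℤ) : ZMod (p ^ 2)) : ℂ) *
      (if (((kpoly k).derivative.eval (a : ℤ) : ℤ) : ZMod p) = 0 then (p : ℂ) else 0) := by
  unfold qsum
  set P := kpoly k
  have h1 : ∀ a b : ℕ, (ZMod.stdAddChar ((P.eval ((a + p * b : ℕ) : ℤ) : ℤ) : ZMod (p ^ 2)) : ℂ) =
      ZMod.stdAddChar ((P.eval (a : ℤ) : ℤ) : ZMod (p ^ 2)) *
        ZMod.stdAddChar ((b : ZMod p) * ((P.derivative.eval (a : ℤ) : ℤ) : ZMod p)) := by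
    intro a b
    rw [← std_iotap p ((b : ZMod p) * _), ← AddChar.map_add_eq_mul]
    congr 1
    have h2 := Polynomial.aeval_add_of_sq_eq_zero P (a : ZMod (p ^ 2)) (p * b : ZMod (p ^ 2)) (by
      rw [mul_pow, ← Nat.cast_pow, ZMod.natCast_self, zero_mul])
    have h3 : ∀ (R : Polynomial ℤ) (z : ℤ), ((R.eval z : ℤ) : ZMod (p ^ 2)) = Polynomial.aeval (z : ZMod (p ^ 2)) R := by
      intro R z
      rw [Polynomial.aeval_def, Polynomial.eval₂_at_intCast]
      simp
    rw [h3, h3]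
    have h4 : (b : ZMod p) * ((P.derivative.eval (a : ℤ) : ℤ) : ZMod p) = ((b * P.derivative.eval (a : ℤ) : ℤ) : ZMod p) := by
      push_cast; rfl
    rw [h4, iotap_int, Int.cast_mul, h3]
    push_cast
    rw [h2]; ring
  have h5 : ∑ h ∈ range (p ^ 2), (ZMod.stdAddChar ((P.eval (h : ℤ) : ℤ) : ZMod (p ^ 2)) : ℂ) =
      ∑ a ∈ range p, ∑ b ∈ range p, (ZMod.stdAddChar ((P.eval ((a + p * b : ℕ) : ℤ) : ℤ) : ZMod (p ^ 2)) : ℂ) := by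
    rw [← Finset.sum_product']
    symm
    refine Finset.sum_nbij' (fun x => x.1 + p * x.2) (fun h => (h % p, h / p)) ?_ ?_ ?_ ?_ ?_
    · rintro ⟨a, b⟩ hx
      rw [mem_product, mem_range, mem_range] at hx
      rw [mem_range]
      simp only at hx ⊢
      nlinarith [hx.1, hx.2]
    · intro h hh
      rw [mem_range] at hh
      rw [mem_product, mem_range, mem_range]
      exact ⟨Nat.mod_lt _ hp.out.pos, Nat.div_lt_of_lt_mul (by rw [← sq]; exact hh)⟩
    · rintro ⟨a, b⟩ hx
      rw [mem_product, mem_range, mem_range] at hx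
      simp only at hx ⊢
      rw [Nat.add_mul_mod_self_left, Nat.mod_eq_of_lt hx.1, Nat.add_mul_div_left _ _ hp.out.pos, Nat.div_eq_of_lt hx.1, zero_add]
    · intro h _
      exact Nat.mod_add_div h p
    · intro x _; rfl
  rw [h5]
  refine Finset.sum_congr rfl fun a _ => ?_
  rw [Finset.sum_congr rfl (fun b _ => h1 a b), ← Finset.mul_sum]
  congr 1
  rw [sum_range_zmod p (fun b => (ZMod.stdAddChar (b * ((P.derivative.eval (a : ℤ) : ℤ) : ZMod p)) : ℂ)),
    AddChar.sum_mulShift _ (ZMod.isPrimitive_stdAddChar p), ZMod.card]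
  split_ifs <;> simp

lemma kpoly_deriv {d : ℕ} (k : Fin d → ℤ) (p : ℕ) (a : ℤ) :
    (((kpoly k).derivative.eval a : ℤ) : ZMod p) = ∑ j : Fin d, (((j.val : ZMod p) + 1) * (k j : ZMod p)) * (a : ZMod p) ^ j.val := by
  unfold kpoly
  rw [Polynomial.derivative_sum, Polynomial.eval_finsetSum]
  push_cast
  refine Finset.sum_congr rfl fun j _ => ?_
  simp
  ring

lemma qsum_trivial (p : ℕ) [NeZero (p ^ 2)] {d : ℕ} (k : Fin d → ℤ) : ‖qsum p k‖ ≤ (p : ℝ) ^ 2 := by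
  unfold qsum
  refine (norm_sum_le _ _).trans ?_
  simp only [AddChar.norm_apply]
  simp

lemma width_bounds {d : ℕ} (k : Fin d → ℤ) (h : (supp k).Nonempty) :
    ∃ i0 : ℕ, (∀ j, k j ≠ 0 → i0 ≤ j.val ∧ j.val + 1 ≤ i0 + width k) ∧
      ∃ j1, k j1 ≠ 0 ∧ j1.val + 1 = i0 + width k := by
  have hm : ((supp k).min' h).val ≤ ((supp k).max' h).val := (supp k).min'_le_max' h
  refine ⟨((supp k).min' h).val, ?_, (supp k).max' h, ?_, ?_⟩
  · intro j hj
    have hj' : j ∈ supp k := by simp [supp, hj]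
    have h1 : ((supp k).min' h).val ≤ j.val := (supp k).min'_le j hj'
    have h2 : j.val ≤ ((supp k).max' h).val := (supp k).le_max' j hj'
    unfold width
    rw [dif_pos h]
    omega
  · have := (supp k).max'_mem h
    simpa [supp] using this
  · unfold width
    rw [dif_pos h]
    omega

lemma width_pos {d : ℕ} (k : Fin d → ℤ) : 1 ≤ width k := by
  unfold width; split_ifs <;> omega

lemma qsum_case1 (p : ℕ) [hp : Fact p.Prime] [NeZero (p ^ 2)] {d : ℕ} (hd : d ≤ p) (k : Fin d → ℤ) (i : Fin d)
    (hi : ¬ (p : ℤ) ∣ k i) (hip : i.val + 1 ≠ p) : ‖qsum p k‖ ≤ p * width k := by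
  classical
  have hki : k i ≠ 0 := by intro h; rw [h] at hi; exact hi (dvd_zero _)
  have hne : (supp k).Nonempty := ⟨i, by simp [supp, hki]⟩
  obtain ⟨i0, hb, -⟩ := width_bounds k hne
  set w := width k with hw
  let R : Polynomial (ZMod p) := ∑ j ∈ supp k, Polynomial.C (((j.val : ZMod p) + 1) * (k j : ZMod p)) * Polynomial.X ^ (j.val - i0)
  have hs : ∀ j ∈ supp k, i0 ≤ j.val ∧ j.val + 1 ≤ i0 + w := fun j hj => hb j (by simpa [supp] using hj)
  have hdeg : R.natDegree ≤ w - 1 := by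
    apply Polynomial.natDegree_sum_le_of_forall_le
    intro j hj
    refine (Polynomial.natDegree_C_mul_X_pow_le _ _).trans ?_
    have := hs j hj; omega
  have hR0 : R ≠ 0 := by
    intro h0
    have hc : R.coeff (i.val - i0) = ((i.val : ZMod p) + 1) * (k i : ZMod p) := by
      simp only [R, Polynomial.finsetSum_coeff, Polynomial.coeff_C_mul, Polynomial.coeff_X_pow]
      rw [Finset.sum_eq_single i]
      · simp
      · intro j hj hji
        rw [if_neg, mul_zero]
        intro h
        apply hji
        have h1 := hs j hj
        have h2 := hb i hki
        apply Fin.ext; omega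
      · intro h; exact absurd (by simp [supp, hki]) h
    rw [h0, Polynomial.coeff_zero] at hc
    rcases mul_eq_zero.mp hc.symm with h | h
    · have : ((i.val + 1 : ℕ) : ZMod p) = 0 := by push_cast; exact h
      rw [ZMod.natCast_eq_zero_iff] at this
      have h3 := Nat.le_of_dvd (by omega) this
      have := i.isLt
      omega
    · rw [ZMod.intCast_zmod_eq_zero_iff_dvd] at h
      exact hi h
  have heval : ∀ a : ℤ, (((kpoly k).derivative.eval a : ℤ) : ZMod p) = (a : ZMod p) ^ i0 * R.eval (a : ZMod p) := by
    intro a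
    rw [kpoly_deriv, Polynomial.eval_finsetSum, Finset.mul_sum]
    symm
    rw [← Finset.sum_subset (Finset.subset_univ (supp k))]
    · refine Finset.sum_congr rfl fun j hj => ?_
      simp only [Polynomial.eval_mul, Polynomial.eval_C, Polynomial.eval_pow, Polynomial.eval_X]
      have h1 : (a : ZMod p) ^ j.val = (a : ZMod p) ^ i0 * (a : ZMod p) ^ (j.val - i0) := by
        rw [← pow_add]; congr 1; have := hs j hj; omega
      rw [h1]; ring
    · intro j _ hj
      have : k j = 0 := by by_contra h; exact hj (by simp [supp, h])
      rw [this]; simp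
  have hcount : ((range p).filter (fun a : ℕ => (((kpoly k).derivative.eval (a : ℤ) : ℤ) : ZMod p) = 0)).card ≤ w := by
    calc _ ≤ (insert 0 R.roots.toFinset).card := by
          apply Finset.card_le_card_of_injOn (fun a : ℕ => (a : ZMod p))
          · intro a ha
            rw [Finset.mem_coe, mem_filter, heval] at ha
            rw [Finset.mem_coe, mem_insert, Multiset.mem_toFinset, Polynomial.mem_roots hR0, Polynomial.IsRoot.def]
            rcases mul_eq_zero.mp ha.2 with h | h
            · left; have := eq_zero_of_pow_eq_zero h; simpa using this
            · right; simpa using h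
          · intro a ha b hb' hab
            rw [Finset.mem_coe, mem_filter, mem_range] at ha hb'
            simp only at hab
            rw [← ZMod.val_cast_of_lt ha.1, ← ZMod.val_cast_of_lt hb'.1, hab]
      _ ≤ R.roots.toFinset.card + 1 := Finset.card_insert_le _ _
      _ ≤ (w - 1) + 1 := by
          gcongr
          exact (Multiset.toFinset_card_le _).trans (R.card_roots'.trans hdeg)
      _ = w := by have := width_pos k; omega
  rw [qsum_eq]
  refine (norm_sum_le _ _).trans ?_
  calc ∑ a ∈ range p, ‖(ZMod.stdAddChar (((kpoly k).eval (a : ℤ) : ℤ) : ZMod (p ^ 2)) : ℂ) *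
      (if (((kpoly k).derivative.eval (a : ℤ) : ℤ) : ZMod p) = 0 then (p : ℂ) else 0)‖ 
      = ∑ a ∈ range p, (if (((kpoly k).derivative.eval (a : ℤ) : ℤ) : ZMod p) = 0 then (p : ℝ) else 0) := by
        refine Finset.sum_congr rfl fun a _ => ?_
        rw [norm_mul, AddChar.norm_apply, one_mul]
        split_ifs <;> simp
    _ = ((range p).filter (fun a : ℕ => (((kpoly k).derivative.eval (a : ℤ) : ℤ) : ZMod p) = 0)).card * (p : ℝ) := by
        rw [← Finset.sum_filter, Finset.sum_const, nsmul_eq_mul]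
    _ ≤ w * (p : ℝ) := by gcongr
    _ = _ := mul_comm _ _

lemma sum_zmod_units (p : ℕ) [hp : Fact p.Prime] (F : ZMod p → ℂ) :
    ∑ x : ZMod p, F x = F 0 + ∑ u : (ZMod p)ˣ, F u := by
  classical
  rw [← Finset.add_sum_erase univ F (mem_univ 0)]
  congr 1
  symm
  refine Finset.sum_bij (fun u _ => (u : ZMod p)) ?_ ?_ ?_ ?_
  · intro u _; exact mem_erase.mpr ⟨u.ne_zero, mem_univ _⟩
  · intro u _ v _ h; exact Units.ext h
  · intro x hx
    exact ⟨Units.mk0 x (mem_erase.mp hx).1, mem_univ _, rfl⟩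
  · intro u _; rfl

lemma tau_zero (p : ℕ) [hp : Fact p.Prime] : tau p 0 = 0 := by
  have := tau_int p 0
  simpa [hp.out.ne_zero] using this

set_option maxHeartbeats 1000000 in
lemma bad_sum (p : ℕ) [hp : Fact p.Prime] [NeZero (p ^ 2)] (k : Fin p → ℤ) (i : Fin p) (hip : i.val + 1 = p)
    (hi : ¬ (p : ℤ) ∣ k i) (hk : ∀ j : Fin p, j.val + 1 ≠ p → (p : ℤ) ∣ k j) (hT : 10 ≤ Real.log (2 * p)) :
    Real.log (2 * p) * ‖∑ a ∈ range p, (ZMod.stdAddChar (((kpoly k).eval (a : ℤ) : ℤ) : ZMod (p ^ 2)) : ℂ)‖ ≤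
      10 * p * width k := by
  classical
  have hp2 := hp.out.two_le
  have hki : k i ≠ 0 := by intro h; rw [h] at hi; exact hi (dvd_zero _)
  have hne : (supp k).Nonempty := ⟨i, by simp [supp, hki]⟩
  obtain ⟨i0, hb, j1, hj1, hj1w⟩ := width_bounds k hne
  set w := width k with hw
  have hw1 : 1 ≤ w := width_pos k
  have hiw : i0 + w = p := by
    have := (hb i hki).2
    have := j1.isLt
    omega
  choose! c hc using hk
  have hne_i : ∀ j : Fin p, j ≠ i → j.val + 1 ≠ p := by
    intro j hj h; apply hj; apply Fin.ext; omega
  let G : ZMod p → ZMod p := fun x => ∑ j ∈ univ.erase i, (c j : ZMod p) * x ^ (j.val + 1)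
  let F : ZMod p → ℂ := fun x => ZMod.stdAddChar ((k i : ZMod (p ^ 2)) * tau p x + iotap p (G x))
  have hF : ∀ a : ℤ, (ZMod.stdAddChar (((kpoly k).eval a : ℤ) : ZMod (p ^ 2)) : ℂ) = F (a : ZMod p) := by
    intro a
    simp only [F, G]
    congr 1
    have h1 : ∑ j ∈ univ.erase i, (c j : ZMod p) * (a : ZMod p) ^ (j.val + 1) =
        ((∑ j ∈ univ.erase i, c j * a ^ (j.val + 1) : ℤ) : ZMod p) := by push_cast; rfl
    rw [h1, iotap_int, tau_int]
    have h2 : (kpoly k).eval a = k i * a ^ p + p * ∑ j ∈ univ.erase i, c j * a ^ (j.val + 1) := by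
      unfold kpoly
      rw [Polynomial.eval_finsetSum, ← Finset.add_sum_erase univ _ (mem_univ i), Finset.mul_sum]
      congr 1
      · simp [hip]
      · refine Finset.sum_congr rfl fun j hj => ?_
        rw [hc j (hne_i j (mem_erase.mp hj).1)]
        simp
        ring
    rw [h2]; push_cast; rfl
  have hsum : ∑ a ∈ range p, (ZMod.stdAddChar (((kpoly k).eval (a : ℤ) : ℤ) : ZMod (p ^ 2)) : ℂ) =
      F 0 + ∑ u : (ZMod p)ˣ, F u := by
    rw [← sum_zmod_units, ← sum_range_zmod]
    refine Finset.sum_congr rfl fun a _ => ?_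
    rw [hF]; simp
  have hF0 : ‖F 0‖ = 1 := AddChar.norm_apply _ _
  let c' : ℕ → ZMod p := fun l => (c ⟨p - 2 - l, by omega⟩ : ZMod p)
  let J := (Finset.Icc 1 (p - 2)).filter (fun l => c' l ≠ 0)
  have hG : ∀ u : (ZMod p)ˣ, G ((u⁻¹ : (ZMod p)ˣ) : ZMod p) = c' 0 + ∑ j : J, c' j * (u : ZMod p) ^ j.1 := by
    intro u
    have h1 : G ((u⁻¹ : (ZMod p)ˣ) : ZMod p) = ∑ l ∈ range (p - 1), c' l * (u : ZMod p) ^ l := by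
      refine Finset.sum_nbij' (fun j => p - 2 - j.val) (fun l => (⟨p - 2 - l, by omega⟩ : Fin p)) ?_ ?_ ?_ ?_ ?_
      · intro j _; rw [mem_range]; omega
      · intro l _; rw [mem_erase]; refine ⟨?_, mem_univ _⟩
        intro h; rw [Fin.ext_iff] at h; simp only at h; omega
      · intro j hj
        have := hne_i j (mem_erase.mp hj).1
        have := j.isLt
        apply Fin.ext; simp only; omega
      · intro l hl; rw [mem_range] at hl; simp only; omega
      · intro j hj
        have h3 := hne_i j (mem_erase.mp hj).1
        have h4 := j.isLt
        have h5 : (⟨p - 2 - (p - 2 - j.val), by omega⟩ : Fin p) = j := by apply Fin.ext; simp only; omega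
        simp only [c']
        rw [h5]
        congr 1
        have h6 : (u : ZMod p) ^ (p - 1) = 1 := ZMod.pow_card_sub_one_eq_one u.ne_zero
        have h7 : (u : ZMod p) ^ (j.val + 1) * (u : ZMod p) ^ (p - 2 - j.val) = 1 := by
          rw [← pow_add, ← h6]; congr 1; omega
        have h8 : ((u⁻¹ : (ZMod p)ˣ) : ZMod p) ^ (j.val + 1) * (u : ZMod p) ^ (j.val + 1) = 1 := by
          rw [← mul_pow, Units.inv_mul, one_pow]
        calc ((u⁻¹ : (ZMod p)ˣ) : ZMod p) ^ (j.val + 1) = ((u⁻¹ : (ZMod p)ˣ) : ZMod p) ^ (j.val + 1) * ((u : ZMod p) ^ (j.val + 1) * (u : ZMod p) ^ (p - 2 - j.val)) := by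
              rw [h7, mul_one]
          _ = _ := by rw [← mul_assoc, h8, one_mul]
    rw [h1]
    have h2 : range (p - 1) = insert 0 (Finset.Icc 1 (p - 2)) := by
      ext l; rw [mem_range, mem_insert, mem_Icc]; omega
    rw [h2, Finset.sum_insert (by simp)]
    congr 1
    · simp
    · rw [Finset.sum_coe_sort J (fun j => c' j * (u : ZMod p) ^ j), Finset.sum_filter]
      refine Finset.sum_congr rfl fun l _ => ?_
      split_ifs with h
      · rfl
      · push Not at h
        rw [h, zero_mul]
  have hFu : ∑ u : (ZMod p)ˣ, F u = ZMod.stdAddChar (c' 0) * ∑ u, thetaJ p (k i : ZMod (p ^ 2)) J c' u := by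
    rw [Finset.mul_sum]
    refine Fintype.sum_equiv (Equiv.inv _) _ _ fun u => ?_
    have : (u : ZMod p) = (((Equiv.inv (ZMod p)ˣ u)⁻¹ : (ZMod p)ˣ) : ZMod p) := by
      simp only [Equiv.inv_apply, inv_inv]
    rw [this]
    set v := Equiv.inv (ZMod p)ˣ u
    simp only [F]
    rw [hG v, AddChar.map_add_eq_mul, std_iotap, AddChar.map_add_eq_mul, addChar_sum]
    unfold thetaJ
    ring
  have hunit : IsUnit (k i : ZMod (p ^ 2)) := by
    rw [ZMod.coe_int_isUnit_iff_isCoprime]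
    push_cast
    apply IsCoprime.pow_left
    exact (Prime.coprime_iff_not_dvd (Nat.prime_iff_prime_int.mp hp.out)).mpr hi
  have hfin := twisted_final p hT (k i : ZMod (p ^ 2)) hunit J c' (fun j hj => (mem_filter.mp hj).2) w (by
    intro l hl
    have h1 := mem_filter.mp hl
    rw [mem_Icc] at h1
    refine ⟨h1.1.1, ?_⟩
    have h2 : k ⟨p - 2 - l, by omega⟩ ≠ 0 := by
      intro h0
      apply h1.2
      have := hc ⟨p - 2 - l, by omega⟩ (by simp only; omega)
      rw [h0] at this
      have hpz : (p : ℤ) ≠ 0 := by exact_mod_cast hp.out.ne_zero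
      have : c ⟨p - 2 - l, by omega⟩ = 0 := by
        rcases mul_eq_zero.mp this.symm with h | h
        · exact absurd h hpz
        · exact h
      simp only [c']
      rw [this]; simp
    have h3 := (hb _ h2).1
    simp only at h3
    omega) hw1 (by omega)
  have hnorm : ‖∑ u : (ZMod p)ˣ, F u‖ = ‖∑ u, thetaJ p (k i : ZMod (p ^ 2)) J c' u‖ := by
    rw [hFu, norm_mul, AddChar.norm_apply, one_mul]
  rw [hsum]
  have hp0 : (0 : ℝ) < p := by exact_mod_cast hp.out.pos
  have hTp : Real.log (2 * p) ≤ p := by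
    have h1 := exp_one_mul_le_exp (Real.log (2 * p))
    rw [Real.exp_log (by positivity)] at h1
    have := Real.exp_one_gt_d9
    nlinarith
  have hw1r : (1 : ℝ) ≤ w := by exact_mod_cast hw1
  calc Real.log (2 * p) * ‖F 0 + ∑ u : (ZMod p)ˣ, F u‖ ≤ Real.log (2 * p) * (1 + ‖∑ u, thetaJ p (k i : ZMod (p ^ 2)) J c' u‖) := by
        gcongr
        refine (norm_add_le _ _).trans ?_
        rw [hF0, hnorm]
    _ ≤ p + 9 * p * w := by rw [mul_add, mul_one]; gcongr
    _ ≤ 10 * p * w := by nlinarith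

lemma qsum_case3 (p : ℕ) [hp : Fact p.Prime] [NeZero (p ^ 2)] {d : ℕ} (hd : d ≤ p) (k : Fin d → ℤ) (i : Fin d) (hip : i.val + 1 = p)
    (hi : ¬ (p : ℤ) ∣ k i) (hk : ∀ j : Fin d, j.val + 1 ≠ p → (p : ℤ) ∣ k j) (m : ℕ) (hm : 1 ≤ m) (hmp : m ≤ 2 * p) :
    Real.log m * ‖qsum p k‖ ≤ 10 * (p : ℝ) ^ 2 * width k := by
  obtain rfl : d = p := by have := i.isLt; omega
  have hw1r : (1 : ℝ) ≤ width k := by exact_mod_cast width_pos k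
  have hlm : 0 ≤ Real.log m := Real.log_nonneg (by exact_mod_cast hm)
  by_cases hlog : Real.log m ≤ 10 * width k
  · have := qsum_trivial d k
    calc Real.log m * ‖qsum d k‖ ≤ (10 * width k) * (d : ℝ) ^ 2 := by gcongr
      _ = _ := by ring
  · push Not at hlog
    have hle : Real.log m ≤ Real.log (2 * d) := by
      apply Real.log_le_log (by exact_mod_cast hm)
      exact_mod_cast hmp
    have hb := bad_sum d k i hip hi hk (by linarith)
    have hq : qsum d k = d * ∑ a ∈ range d, (ZMod.stdAddChar (((kpoly k).eval (a : ℤ) : ℤ) : ZMod (d ^ 2)) : ℂ) := by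
      rw [qsum_eq, Finset.mul_sum]
      refine Finset.sum_congr rfl fun a _ => ?_
      rw [if_pos, mul_comm]
      rw [kpoly_deriv]
      refine Finset.sum_eq_zero fun j _ => ?_
      by_cases hj : j.val + 1 = d
      · have : ((j.val : ZMod d) + 1) = 0 := by
          have h : ((j.val + 1 : ℕ) : ZMod d) = 0 := by rw [hj]; exact ZMod.natCast_self d
          push_cast at h; exact h
        rw [this]; simp
      · have : (k j : ZMod d) = 0 := by
          rw [ZMod.intCast_zmod_eq_zero_iff_dvd]; exact hk j hj
        rw [this]; simp
    rw [hq, norm_mul, Complex.norm_natCast]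
    set S := ‖∑ a ∈ range d, (ZMod.stdAddChar (((kpoly k).eval (a : ℤ) : ℤ) : ZMod (d ^ 2)) : ℂ)‖
    calc Real.log m * (d * S) ≤ Real.log (2 * d) * (d * S) := by gcongr
      _ = d * (Real.log (2 * d) * S) := by ring
      _ ≤ d * (10 * d * width k) := by gcongr
      _ = _ := by ring

/-- exponential sum over a Korobov set -/
def qN (p : ℕ) {d : ℕ} (k : Fin d → ℤ) : ℂ :=
  ∑ h ∈ range (p ^ 2), e2pi (∑ j, (k j : ℂ) * ((korobovPt d p h j : ℝ) : ℂ))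

lemma qN_eq (p : ℕ) [hp : Fact p.Prime] [NeZero (p ^ 2)] {d : ℕ} (k : Fin d → ℤ) : qN p k = qsum p k := by
  unfold qN qsum
  refine Finset.sum_congr rfl fun h _ => ?_
  rw [ZMod.stdAddChar_coe]
  unfold e2pi
  have hp0 : (p : ℂ) ≠ 0 := by exact_mod_cast hp.out.ne_zero
  have h1 : (∑ j, (k j : ℂ) * ((korobovPt d p h j : ℝ) : ℂ)) =
      (((kpoly k).eval (h : ℤ) : ℤ) : ℂ) / ((p ^ 2 : ℕ) : ℂ) - ((∑ j, k j * ⌊(h : ℝ) ^ (j.val + 1) / (p : ℝ) ^ 2⌋ : ℤ) : ℂ) := by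
    unfold kpoly korobovPt
    rw [Polynomial.eval_finsetSum]
    push_cast
    rw [Finset.sum_div, ← Finset.sum_sub_distrib]
    refine Finset.sum_congr rfl fun j _ => ?_
    have hfr : Int.fract ((h : ℝ) ^ (j.val + 1) / (p : ℝ) ^ 2) =
      (h : ℝ) ^ (j.val + 1) / (p : ℝ) ^ 2 - (⌊(h : ℝ) ^ (j.val + 1) / (p : ℝ) ^ 2⌋ : ℝ) := rfl
    rw [hfr]
    simp only [Polynomial.eval_mul, Polynomial.eval_C, Polynomial.eval_pow, Polynomial.eval_X]
    push_cast
    ring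
  rw [h1, mul_sub, Complex.exp_sub]
  have h2 : 2 * (Real.pi : ℂ) * Complex.I * ((∑ j, k j * ⌊(h : ℝ) ^ (j.val + 1) / (p : ℝ) ^ 2⌋ : ℤ) : ℂ) =
    ((∑ j, k j * ⌊(h : ℝ) ^ (j.val + 1) / (p : ℝ) ^ 2⌋ : ℤ) : ℂ) * (2 * (Real.pi : ℂ) * Complex.I) := by ring
  rw [h2, Complex.exp_int_mul_two_pi_mul_I, div_one]
  congr 1
  ring

lemma qN_bound (m : ℕ) (hm : 2 ≤ m) {d : ℕ} (k : Fin d → ℤ) (p : ℕ) (hp : p.Prime) (hmp : m ≤ 2 * p) (hd : d ≤ p) :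
    ‖qN p k‖ ≤ p * width k + (if ∀ j, (p : ℤ) ∣ k j then (p : ℝ) ^ 2 else 0) +
      (if p = d then 10 * (p : ℝ) ^ 2 * width k / Real.log m else 0) := by
  have : Fact p.Prime := ⟨hp⟩
  have : NeZero (p ^ 2) := ⟨pow_ne_zero _ hp.ne_zero⟩
  rw [qN_eq]
  have hlog : 0 < Real.log m := Real.log_pos (by exact_mod_cast hm)
  have n1 : (0 : ℝ) ≤ p * width k := by positivity
  have n2 : (0 : ℝ) ≤ (if ∀ j, (p : ℤ) ∣ k j then (p : ℝ) ^ 2 else 0) := by split_ifs <;> positivity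
  have n3 : (0 : ℝ) ≤ (if p = d then 10 * (p : ℝ) ^ 2 * width k / Real.log m else 0) := by split_ifs <;> positivity
  by_cases h1 : ∃ i : Fin d, ¬ (p : ℤ) ∣ k i ∧ i.val + 1 ≠ p
  · obtain ⟨i, hi, hip⟩ := h1
    have := qsum_case1 p hd k i hi hip
    linarith
  push Not at h1
  by_cases h2 : ∀ j, (p : ℤ) ∣ k j
  · have := qsum_trivial p k
    rw [if_pos h2]
    linarith
  push Not at h2
  obtain ⟨i, hi⟩ := h2
  have hip := h1 i hi
  have hpd : p = d := by have := i.isLt; omega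
  have := qsum_case3 p hd k i hip hi (fun j hj => by by_contra h; exact hj (h1 j h)) m (by omega) hmp
  rw [if_pos hpd]
  have h3 : ‖qsum p k‖ ≤ 10 * (p : ℝ) ^ 2 * width k / Real.log m := by
    rw [le_div_iff₀ hlog]; linarith
  linarith

lemma div_count (m : ℕ) (hm : 2 ≤ m) {d : ℕ} (k : Fin d → ℤ) (hne : (supp k).Nonempty) :
    (((Pset m).filter (fun p : ℕ => ∀ j, (p : ℤ) ∣ k j)).card : ℝ) * Real.log (m / 2) ≤ logmin k := by
  unfold logmin
  rw [dif_pos hne]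
  apply Finset.le_inf'
  intro j hj
  have hkj : k j ≠ 0 := by simpa [supp] using hj
  set D := (Pset m).filter (fun p : ℕ => ∀ j, (p : ℤ) ∣ k j)
  have h1 : ∏ p ∈ D, p ∣ (k j).natAbs := by
    apply Finset.prod_primes_dvd
    · intro p hp
      have := (mem_filter.mp hp).1
      exact (mem_filter.mp this).2.1.prime
    · intro p hp
      exact Int.natCast_dvd.mp ((mem_filter.mp hp).2 j)
  have h2 : ∏ p ∈ D, p ≤ (k j).natAbs := Nat.le_of_dvd (Int.natAbs_pos.mpr hkj) h1
  have h3 : ((m : ℝ) / 2) ^ D.card ≤ |(k j : ℝ)| := by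
    calc ((m : ℝ) / 2) ^ D.card = ∏ p ∈ D, ((m : ℝ) / 2) := by rw [Finset.prod_const]
      _ ≤ ∏ p ∈ D, (p : ℝ) := by
        apply Finset.prod_le_prod
        · intro _ _; positivity
        · intro p hp
          have := (mem_filter.mp (mem_filter.mp hp).1).2.2
          have : m ≤ 2 * p := by omega
          have : (m : ℝ) ≤ 2 * p := by exact_mod_cast this
          linarith
      _ = ((∏ p ∈ D, p : ℕ) : ℝ) := by push_cast; rfl
      _ ≤ ((k j).natAbs : ℝ) := Nat.cast_le.mpr h2
      _ = _ := by rw [Nat.cast_natAbs]; simp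
  rw [← Real.log_pow]
  apply Real.log_le_log _ h3
  have : (0 : ℝ) < m := by exact_mod_cast (by omega : 0 < m)
  positivity

lemma total_bound (cP : ℝ) (hc0 : 0 < cP) (hc : cP ≤ 1 / 2) (m : ℕ) (hm : 32 ≤ m)
    (hcard : cP * m / Real.log m ≤ ((Pset m).card : ℝ)) {d : ℕ} (hd : ∀ p ∈ Pset m, d ≤ p)
    (k : Fin d → ℤ) (hk : k ≠ 0) :
    cP * m * ∑ p ∈ Pset m, ‖qN p k‖ ≤ 16 * ((∑ p ∈ Pset m, p ^ 2 : ℕ) : ℝ) * weight2 k := by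
  classical
  have hne : (supp k).Nonempty := by
    obtain ⟨j, hj⟩ := Function.ne_iff.mp hk
    exact ⟨j, by simpa [supp] using hj⟩
  have hmr : (32 : ℝ) ≤ m := by exact_mod_cast hm
  have hlog : 0 < Real.log m := Real.log_pos (by linarith)
  set N : ℝ := ((∑ p ∈ Pset m, p ^ 2 : ℕ) : ℝ) with hN
  have hN' : N = ∑ p ∈ Pset m, (p : ℝ) ^ 2 := by rw [hN]; push_cast; rfl
  have hN0 : 0 ≤ N := by positivity
  set C : ℝ := ((Pset m).card : ℝ) with hC
  have hCm : cP * m ≤ C * Real.log m := by rwa [div_le_iff₀ hlog] at hcard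
  have hmem : ∀ p ∈ Pset m, p.Prime ∧ m ≤ 2 * p ∧ p ≤ m := by
    intro p hp
    have := mem_filter.mp hp
    rw [mem_range] at this
    exact ⟨this.2.1, by omega, by omega⟩
  set w : ℝ := (width k : ℝ) with hw
  have hw1 : 1 ≤ w := by rw [hw]; exact_mod_cast width_pos k
  have hb : ∑ p ∈ Pset m, ‖qN p k‖ ≤ ∑ p ∈ Pset m, (p * w + (if ∀ j, (p : ℤ) ∣ k j then (p : ℝ) ^ 2 else 0) +
      (if p = d then 10 * (p : ℝ) ^ 2 * w / Real.log m else 0)) :=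
    Finset.sum_le_sum fun p hp => qN_bound m (by omega) k p (hmem p hp).1 (hmem p hp).2.1 (hd p hp)
  rw [Finset.sum_add_distrib, Finset.sum_add_distrib] at hb
  set S1 := ∑ p ∈ Pset m, (p * w : ℝ) with hS1
  set S2 := ∑ p ∈ Pset m, (if ∀ j, (p : ℤ) ∣ k j then (p : ℝ) ^ 2 else 0) with hS2
  set S3 := ∑ p ∈ Pset m, (if p = d then 10 * (p : ℝ) ^ 2 * w / Real.log m else 0) with hS3
  have b1 : cP * m * S1 ≤ N * w := by
    have : m * S1 ≤ 2 * N * w := by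
      rw [hS1, Finset.mul_sum, hN', Finset.mul_sum, Finset.sum_mul]
      apply Finset.sum_le_sum
      intro p hp
      have h1 : (m : ℝ) ≤ 2 * p := by exact_mod_cast (hmem p hp).2.1
      have h2 : (0 : ℝ) ≤ p * w := by positivity
      nlinarith
    have h0 : 0 ≤ m * S1 := by
      have : 0 ≤ S1 := Finset.sum_nonneg fun p _ => by positivity
      positivity
    calc cP * m * S1 = cP * (m * S1) := by ring
      _ ≤ (1 / 2) * (2 * N * w) := by gcongr
      _ = _ := by ring
  have b3 : cP * m * S3 ≤ 10 * N * w := by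
    rw [hS3, Finset.sum_ite_eq' (Pset m) d (fun p => 10 * (p : ℝ) ^ 2 * w / Real.log m)]
    split_ifs with hdm
    · have h1 : C * (d : ℝ) ^ 2 ≤ N := by
        rw [hN', hC, ← nsmul_eq_mul]
        apply Finset.card_nsmul_le_sum
        intro p hp
        have : (d : ℝ) ≤ p := by exact_mod_cast hd p hp
        gcongr
      calc cP * m * (10 * (d : ℝ) ^ 2 * w / Real.log m) ≤ (C * Real.log m) * (10 * (d : ℝ) ^ 2 * w / Real.log m) := by gcongr
        _ = 10 * (C * (d : ℝ) ^ 2) * w := by field_simp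
        _ ≤ _ := by gcongr
    · rw [mul_zero]; positivity
  have b2 : cP * m * S2 ≤ 5 * N * logmin k := by
    have hdc := div_count m (by omega) k hne
    set K : ℝ := (((Pset m).filter (fun p : ℕ => ∀ j, (p : ℤ) ∣ k j)).card : ℝ) with hK
    have h1 : S2 ≤ K * (m : ℝ) ^ 2 := by
      rw [hS2, ← Finset.sum_filter, hK, ← nsmul_eq_mul]
      apply Finset.sum_le_card_nsmul
      intro p hp
      have : (p : ℝ) ≤ m := by exact_mod_cast (hmem p (mem_filter.mp hp).1).2.2
      gcongr
    have h2 : C * (m : ℝ) ^ 2 ≤ 4 * N := by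
      have : C * ((m : ℝ) / 2) ^ 2 ≤ N := by
        rw [hN', hC, ← nsmul_eq_mul]
        apply Finset.card_nsmul_le_sum
        intro p hp
        have : (m : ℝ) ≤ 2 * p := by exact_mod_cast (hmem p hp).2.1
        have : (m : ℝ) / 2 ≤ p := by linarith
        gcongr
      linarith
    have h3 : Real.log m ≤ 5 / 4 * Real.log (m / 2) := by
      have e1 : Real.log m = Real.log (m / 2) + Real.log 2 := by
        rw [← Real.log_mul (by positivity) (by norm_num)]; congr 1; ring
      have e2 : 4 * Real.log 2 ≤ Real.log (m / 2) := by
        have : 4 * Real.log 2 = Real.log (2 ^ 4) := by rw [Real.log_pow]; norm_num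
        rw [this]
        apply Real.log_le_log (by norm_num)
        linarith
      linarith
    have hK0 : 0 ≤ K := by positivity
    calc cP * m * S2 ≤ (C * Real.log m) * (K * (m : ℝ) ^ 2) := by
          have : 0 ≤ S2 := Finset.sum_nonneg fun p _ => by split_ifs <;> positivity
          gcongr
      _ = (C * (m : ℝ) ^ 2) * (K * Real.log m) := by ring
      _ ≤ (4 * N) * (K * (5 / 4 * Real.log (m / 2))) := by gcongr
      _ = 5 * N * (K * Real.log (m / 2)) := by ring
      _ ≤ _ := by gcongr
  have hW1 : w ≤ weight2 k := le_max_left _ _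
  have hW2 : logmin k ≤ weight2 k := le_max_right _ _
  calc cP * m * ∑ p ∈ Pset m, ‖qN p k‖ ≤ cP * m * (S1 + S2 + S3) := by gcongr
    _ = cP * m * S1 + cP * m * S2 + cP * m * S3 := by ring
    _ ≤ N * w + 5 * N * logmin k + 10 * N * w := by gcongr
    _ ≤ N * weight2 k + 5 * N * weight2 k + 10 * N * weight2 k := by gcongr
    _ = _ := by ring

/-- character at real points -/
def ek {d : ℕ} (k : Fin d → ℤ) (x : Fin d → ℝ) : ℂ := e2pi (∑ j, (k j : ℂ) * (x j : ℂ))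

lemma ek_norm {d : ℕ} (k : Fin d → ℤ) (x : Fin d → ℝ) : ‖ek k x‖ = 1 := by
  unfold ek e2pi
  have : 2 * (Real.pi : ℂ) * Complex.I * (∑ j, (k j : ℂ) * (x j : ℂ)) =
      ((2 * Real.pi * ∑ j, (k j : ℝ) * x j : ℝ) : ℂ) * Complex.I := by push_cast; ring
  rw [this, Complex.norm_exp_ofReal_mul_I]

lemma ek_cont {d : ℕ} (k : Fin d → ℤ) : Continuous (ek k) := by
  unfold ek e2pi
  fun_prop

lemma ek_prod {d : ℕ} (k : Fin d → ℤ) (x : Fin d → ℝ) : ek k x = ∏ j, e2pi ((k j : ℂ) * (x j : ℂ)) := by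
  unfold ek e2pi
  rw [Finset.mul_sum, Complex.exp_sum]

open MeasureTheory in
lemma int_one (n : ℤ) : ∫ x in Set.Ico (0 : ℝ) 1, e2pi ((n : ℂ) * (x : ℂ)) = if n = 0 then 1 else 0 := by
  rw [integral_Ico_eq_integral_Ioc, ← intervalIntegral.integral_of_le zero_le_one]
  unfold e2pi
  split_ifs with h
  · subst h; simp
  · have hc : (2 * (Real.pi : ℂ) * Complex.I * n) ≠ 0 := by
      have : (n : ℂ) ≠ 0 := by exact_mod_cast h
      have h2 := Complex.two_pi_I_ne_zero
      exact mul_ne_zero h2 this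
    simp_rw [← mul_assoc]
    rw [integral_exp_mul_complex hc]
    have : 2 * (Real.pi : ℂ) * Complex.I * n * ((1 : ℝ) : ℂ) = n * (2 * (Real.pi : ℂ) * Complex.I) := by push_cast; ring
    rw [this, Complex.exp_int_mul_two_pi_mul_I]
    simp

open MeasureTheory in
lemma int_ek {d : ℕ} (k : Fin d → ℤ) :
    ∫ x in Set.univ.pi fun _ : Fin d => Set.Ico (0 : ℝ) 1, ek k x = if k = 0 then 1 else 0 := by
  rw [volume_pi, Measure.restrict_pi_pi]
  simp_rw [ek_prod]
  rw [integral_fintype_prod_eq_prod (fun j (y : ℝ) => e2pi ((k j : ℂ) * (y : ℂ)))]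
  simp_rw [int_one]
  split_ifs with h
  · subst h; simp
  · obtain ⟨j, hj⟩ := Function.ne_iff.mp h
    exact Finset.prod_eq_zero (mem_univ j) (if_neg hj)

lemma weight2_ge_one {d : ℕ} (k : Fin d → ℤ) : 1 ≤ weight2 k :=
  le_trans (by exact_mod_cast width_pos k) (le_max_left _ _)

open MeasureTheory in
lemma error_bound {d : ℕ} (f : (Fin d → ℝ) → ℝ) (fhat : (Fin d → ℤ) → ℂ) (hs : Summable (fun k : Fin d → ℤ => ‖fhat k‖ * weight2 k))
    (hf : ∀ x : Fin d → ℝ, (f x : ℂ) = ∑' k : Fin d → ℤ, fhat k * e2pi (∑ j, (k j : ℂ) * (x j : ℂ)))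
    (h1 : (∑' k : Fin d → ℤ, ‖fhat k‖ * weight2 k) ≤ 1) (P : Finset ℕ) (N : ℕ) (hN : N = ∑ p ∈ P, p ^ 2) (hN0 : 0 < N)
    (ε : ℝ) (hε : 0 < ε) (hb : ∀ k : Fin d → ℤ, k ≠ 0 → ∑ p ∈ P, ‖qN p k‖ ≤ ε * N * weight2 k) :
    ‖(∫ x in Set.univ.pi fun _ : Fin d => Set.Ico (0 : ℝ) 1, (f x : ℂ)) -
      (1 / (N : ℂ)) * ∑ p ∈ P, ∑ h ∈ Finset.range (p ^ 2), (f (korobovPt d p h) : ℂ)‖ ≤ ε := by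
  have hsn : Summable (fun k => ‖fhat k‖) := by
    refine Summable.of_nonneg_of_le (fun _ => norm_nonneg _) (fun k => ?_) hs
    have := weight2_ge_one k
    have := norm_nonneg (fhat k)
    nlinarith
  have hfs : ∀ x, HasSum (fun k => fhat k * ek k x) (f x : ℂ) := by
    intro x
    have : Summable (fun k => fhat k * ek k x) := by
      apply Summable.of_norm
      simp only [norm_mul, ek_norm, mul_one]
      exact hsn
    rw [hf x]
    exact this.hasSum
  set μ := (volume : Measure (Fin d → ℝ)).restrict (Set.univ.pi fun _ : Fin d => Set.Ico (0 : ℝ) 1) with hμ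
  have hμp : IsProbabilityMeasure μ := by
    constructor
    rw [hμ, Measure.restrict_apply_univ, Real.volume_pi_Ico]
    simp
  have hInteg : HasSum (fun k => fhat k * if k = 0 then 1 else 0) (∫ x, (f x : ℂ) ∂μ) := by
    have := hasSum_integral_of_summable_integral_norm (μ := μ) (F := fun k x => fhat k * ek k x)
      (fun k => by
        refine Integrable.const_mul ?_ _
        refine Integrable.of_bound (ek_cont k).aestronglyMeasurable 1 (Filter.Eventually.of_forall fun x => (ek_norm k x).le))
      (by
        simp only [norm_mul, ek_norm, mul_one, integral_const]
        simpa using hsn)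
    have e1 : (fun x => ∑' k, fhat k * ek k x) = fun x => (f x : ℂ) := by
      funext x; exact (hfs x).tsum_eq
    rw [e1] at this
    have e7 : (fun k => fhat k * if k = 0 then (1 : ℂ) else 0) = fun k => ∫ a, fhat k * ek k a ∂μ := by
      funext k
      rw [integral_const_mul, hμ, int_ek]
    rw [e7]
    exact this
  have hq : HasSum (fun k => (1 / (N : ℂ)) * ∑ p ∈ P, ∑ h ∈ Finset.range (p ^ 2), fhat k * ek k (korobovPt d p h))
      ((1 / (N : ℂ)) * ∑ p ∈ P, ∑ h ∈ Finset.range (p ^ 2), (f (korobovPt d p h) : ℂ)) :=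
    (hasSum_sum fun p _ => hasSum_sum fun h _ => hfs _).mul_left _
  have hd := hInteg.sub hq
  have hNr : (0 : ℝ) < N := by exact_mod_cast hN0
  have hNc : (N : ℂ) ≠ 0 := by exact_mod_cast hN0.ne'
  have hg := (hs.hasSum).mul_left ε
  refine (hd.norm_le_of_bounded hg ?_).trans ?_
  · intro k
    have e2 : ∑ p ∈ P, ∑ h ∈ Finset.range (p ^ 2), fhat k * ek k (korobovPt d p h) = fhat k * ∑ p ∈ P, qN p k := by
      unfold qN ek
      simp_rw [Finset.mul_sum]
    rw [e2]
    by_cases hk : k = 0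
    · subst hk
      have e3 : ∑ p ∈ P, qN p (0 : Fin d → ℤ) = N := by
        rw [hN]
        push_cast
        refine Finset.sum_congr rfl fun p _ => ?_
        simp [qN, e2pi]
      rw [e3, if_pos rfl]
      have e4 : fhat 0 * 1 - 1 / (N : ℂ) * (fhat 0 * N) = 0 := by field_simp; ring
      rw [e4, norm_zero]
      have := weight2_ge_one (0 : Fin d → ℤ)
      positivity
    · rw [if_neg hk, mul_zero, zero_sub, norm_neg, norm_mul, norm_mul]
      have e5 : ‖∑ p ∈ P, qN p k‖ ≤ ε * N * weight2 k := (norm_sum_le _ _).trans (hb k hk)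
      have e6 : ‖1 / (N : ℂ)‖ = 1 / (N : ℝ) := by simp
      rw [e6]
      calc 1 / (N : ℝ) * (‖fhat k‖ * ‖∑ p ∈ P, qN p k‖) ≤ 1 / (N : ℝ) * (‖fhat k‖ * (ε * N * weight2 k)) := by gcongr
        _ = _ := by field_simp
  · calc ε * _ ≤ ε * 1 := by gcongr
      _ = ε := mul_one _

lemma cP_le (cP : ℝ) (h : cP * (2 : ℕ) / Real.log (2 : ℕ) ≤ ((Pset 2).card : ℝ)) : cP ≤ 1 / 2 := by
  have hsub : Pset 2 ⊆ {2} := by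
    intro p hp
    have := mem_filter.mp hp
    rw [mem_range] at this
    have := this.2.1.two_le
    rw [mem_singleton]; omega
  have h1 : ((Pset 2).card : ℝ) ≤ 1 := by
    exact_mod_cast (Finset.card_le_card hsub)
  have hl := Real.log_two_lt_d9
  have hl0 := Real.log_pos (by norm_num : (1 : ℝ) < 2)
  push_cast at h
  rw [div_le_iff₀ hl0] at h
  nlinarith

open MeasureTheory in
theorem strong_polynomial_tractability_Fd2 (cP CP : ℝ) (hc0 : 0 < cP)
    (hcC : cP < min 1 CP)
    (hcard : ∀ m : ℕ, 2 ≤ m →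
      cP * m / Real.log m ≤ ((Pset m).card : ℝ) ∧
      ((Pset m).card : ℝ) ≤ CP * m / Real.log m) :
    ∃ C₂ : ℝ, 0 < C₂ ∧ ∀ d : ℕ, 1 ≤ d → ∀ ε : ℝ, 0 < ε → ε < 1 →
      (∀ p ∈ Pset ⌈16 / (cP * ε)⌉₊, d ≤ p) →
      (∀ (f : (Fin d → ℝ) → ℝ) (fhat : (Fin d → ℤ) → ℂ),
        Continuous f →
        Summable (fun k : Fin d → ℤ => ‖fhat k‖ * weight2 k) →
        (∀ x : Fin d → ℝ,
          (f x : ℂ) = ∑' k : Fin d → ℤ, fhat k * e2pi (∑ j, (k j : ℂ) * (x j : ℂ))) →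
        (∑' k : Fin d → ℤ, ‖fhat k‖ * weight2 k) ≤ 1 →
        ‖(∫ x in Set.univ.pi fun _ : Fin d => Set.Ico (0 : ℝ) 1, (f x : ℂ)) -
            (1 / ((∑ p ∈ Pset ⌈16 / (cP * ε)⌉₊, p ^ 2 : ℕ) : ℂ)) *
              ∑ p ∈ Pset ⌈16 / (cP * ε)⌉₊, ∑ h ∈ Finset.range (p ^ 2),
                (f (korobovPt d p h) : ℂ)‖ ≤ ε) ∧
      ((∑ p ∈ Pset ⌈16 / (cP * ε)⌉₊, p ^ 2 : ℕ) : ℝ) ≤ C₂ * ε⁻¹ ^ 3 / Real.log ε⁻¹ := by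
  have hCP : 0 < CP := hc0.trans (lt_of_lt_of_le hcC (min_le_right _ _))
  have hhalf : cP ≤ 1 / 2 := cP_le cP (hcard 2 le_rfl).1
  refine ⟨CP * (17 / cP) ^ 3, by positivity, ?_⟩
  intro d _ ε hε0 hε1 hd
  set m := ⌈16 / (cP * ε)⌉₊ with hm
  have hce : 0 < cP * ε := by positivity
  have hce2 : cP * ε ≤ 1 / 2 := by nlinarith
  have hmlow : 16 / (cP * ε) ≤ m := Nat.le_ceil _
  have hm32r : (32 : ℝ) ≤ m := by
    refine le_trans ?_ hmlow
    rw [le_div_iff₀ hce]; linarith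
  have hm32 : 32 ≤ m := by exact_mod_cast hm32r
  have hmup : (m : ℝ) ≤ 17 / (cP * ε) := by
    have h1 : (m : ℝ) < 16 / (cP * ε) + 1 := Nat.ceil_lt_add_one (by positivity)
    have h2 : 1 ≤ 1 / (cP * ε) := by rw [le_div_iff₀ hce]; linarith
    have h3 : 17 / (cP * ε) = 16 / (cP * ε) + 1 / (cP * ε) := by ring
    linarith
  have hlog : 0 < Real.log m := Real.log_pos (by linarith)
  have hcm := hcard m (by omega)
  have hmem : ∀ p ∈ Pset m, p.Prime ∧ p ≤ m := by
    intro p hp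
    have := mem_filter.mp hp
    rw [mem_range] at this
    exact ⟨this.2.1, by omega⟩
  constructor
  · intro f fhat _ hs hf h1
    have hN0 : 0 < ∑ p ∈ Pset m, p ^ 2 := by
      have hpos : (0 : ℝ) < (Pset m).card := lt_of_lt_of_le (by positivity) hcm.1
      have hpos' : 0 < (Pset m).card := by exact_mod_cast hpos
      exact Finset.sum_pos (fun p hp => pow_pos (hmem p hp).1.pos 2) (Finset.card_pos.mp hpos')
    apply error_bound f fhat hs hf h1 (Pset m) _ rfl hN0 ε hε0
    intro k hk
    have ht := total_bound cP hc0 hhalf m hm32 hcm.1 hd k hk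
    have hW := weight2_ge_one k
    set N : ℝ := ((∑ p ∈ Pset m, p ^ 2 : ℕ) : ℝ) with hN
    have hNn : 0 ≤ N := by positivity
    have h16 : 16 ≤ cP * m * ε := by
      rw [div_le_iff₀ hce] at hmlow; linarith
    have hcm0 : 0 < cP * m := by positivity
    apply le_of_mul_le_mul_left _ hcm0
    calc cP * m * ∑ p ∈ Pset m, ‖qN p k‖ ≤ 16 * N * weight2 k := ht
      _ ≤ (cP * m * ε) * N * weight2 k := by gcongr
      _ = _ := by ring
  · have hle : Real.log ε⁻¹ ≤ Real.log m := by
      apply Real.log_le_log (by positivity)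
      refine le_trans ?_ hmlow
      rw [inv_eq_one_div, div_le_div_iff₀ hε0 hce]
      nlinarith
    have hl0 : 0 < Real.log ε⁻¹ := Real.log_pos ((one_lt_inv₀ hε0).mpr hε1)
    have h1 : ((∑ p ∈ Pset m, p ^ 2 : ℕ) : ℝ) ≤ (Pset m).card * (m : ℝ) ^ 2 := by
      push_cast
      rw [← nsmul_eq_mul]
      apply Finset.sum_le_card_nsmul
      intro p hp
      have : (p : ℝ) ≤ m := by exact_mod_cast (hmem p hp).2
      gcongr
    calc ((∑ p ∈ Pset m, p ^ 2 : ℕ) : ℝ) ≤ (CP * m / Real.log m) * (m : ℝ) ^ 2 :=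
          h1.trans (mul_le_mul_of_nonneg_right hcm.2 (by positivity))
      _ = CP * (m : ℝ) ^ 3 / Real.log m := by ring
      _ ≤ CP * (17 / (cP * ε)) ^ 3 / Real.log ε⁻¹ := by gcongr
      _ = _ := by congr 1; field_simp
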